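/- arXiv:1202.4539 — 2 statements merged into one kernel-verified Lean document; each statement's English description precedes it below -/
import Mathlib

section
/- Let θ^1, θ^2, θ^3 be real numbers linearly independent over ℚ together with 1. Define ψ(t) = min over integer vectors (x_1, x_2, x_3) with 0 < max(|x_1|, |x_2|, |x_3|) ≤ t of ‖θ^1 x_1 + θ^2 x_2 + θ^3 x_3‖, and set ω = sup{ γ ≥ 0 : liminf_{t→∞} t^γ ψ(t) < ∞ } and ω̂ = sup{ γ ≥ 0 : limsup_{t→∞} t^γ ψ(t) < ∞ } (here ω̂ ≥ 3). Then ω ≥ ω̂ · ( √( ω̂ + 1/ω̂² − 7/4 ) + 1/ω̂ − 1/2 ). -/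
open Filter

/-- Distance from a real number to the nearest integer. -/
noncomputable def nint (x : ℝ) : ℝ := |x - round x|

/-- The irrationality measure function for a linear form in three variables:
`psiL3 θ t = min_{x ∈ ℤ³, 0 < max|x_j| ≤ t} ‖θ¹x₁ + θ²x₂ + θ³x₃‖`. -/
noncomputable def psiL3 (θ : Fin 3 → ℝ) (t : ℝ) : ℝ :=
  sInf {v : ℝ | ∃ x₁ x₂ x₃ : ℤ, 0 < max |x₁| (max |x₂| |x₃|) ∧
    ((max |x₁| (max |x₂| |x₃|) : ℤ) : ℝ) ≤ t ∧
    v = nint (θ 0 * x₁ + θ 1 * x₂ + θ 2 * x₃)}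

/-!
Let `X i` be the consecutive minimal points of the form `X₀ + θ¹X₁ + θ²X₂ + θ³X₃`, with values `L i`
and heights `M i`, so that `ψ` equals `|L i|` between `M i` and `M (i + 1)`. If `ω̂ > α` and
`ω < g α`, then eventually `M (i + 1) ^ α ≤ 1 / |L i| ≤ M i ^ (g α)`, and in particular
`M (i + 1) ≤ M i ^ g`. This forces `α ≤ g² + g + 1`, whence `ω ≥ ω̂ (√(ω̂ - 3/4) - 1/2)`, which for
`ω̂ ≥ 3` is at least `ω̂ (√(ω̂ + 1/ω̂² - 7/4) + 1/ω̂ - 1/2)`.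

As long as the minimal points stay in a plane, the first-column minors of two consecutive ones do
not decrease, and these minors have the order of `|L i| M (i + 1)`. Suppose `α > g² + g + 1`. Then
`|L i| M (i + 1) M (i + 2) → 0`, so three consecutive minimal points are linearly independent
infinitely often; let `p` be an index where this happens.

* If all minimal points after `p` stay in the space spanned by the `p`-th triple, a fixed lattice
  point outside that space has with every later independent triple a determinant that is at least
  `1` and `O(|L i| M (i + 1) M (i + 2))`, which is impossible.
* Otherwise, after enlarging `p`, some `X (q + 2)` lies outside that space while the minimal points
  stay in a plane from `p + 1` to `q`. The determinant of the triple and `X (q + 2)` is at least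
  `1`, so `|L p| M (p + 1) M (p + 2) M (q + 2)` is bounded below, while
  `|L (p + 1)| M (p + 2) ≤ 4 |L q| M (q + 1)`. Eliminating everything but `M (p + 1)` from these two
  inequalities bounds `M (p + 1)`.
-/

theorem abs_det_le_factorial_mul_prod {ι R : Type*} [Fintype ι] [DecidableEq ι] [CommRing R]
    [LinearOrder R] [IsStrictOrderedRing R] {A : Matrix ι ι R} {r c : ι → R}
    (h : ∀ i j, |A i j| ≤ r i * c j) :
    |A.det| ≤ (Fintype.card ι).factorial * ((∏ i, r i) * ∏ j, c j) := by
  have term_le (σ : Equiv.Perm ι) :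
      |Equiv.Perm.sign σ • ∏ i, A (σ i) i| ≤ (∏ i, r i) * ∏ j, c j := by
    calc |Equiv.Perm.sign σ • ∏ i, A (σ i) i| = ∏ i, |A (σ i) i| := by
          rw [← Finset.abs_prod]
          rcases Int.units_eq_one_or (Equiv.Perm.sign σ) with hs | hs <;> simp [hs]
      _ ≤ ∏ i, r (σ i) * c i := Finset.prod_le_prod (fun _ _ => abs_nonneg _) fun i _ => h _ _
      _ = (∏ i, r i) * ∏ j, c j := by rw [Finset.prod_mul_distrib, Equiv.prod_comp σ r]
  calc |A.det| ≤ ∑ σ : Equiv.Perm ι, |Equiv.Perm.sign σ • ∏ i, A (σ i) i| := by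
        rw [Matrix.det_apply]
        exact Finset.abs_sum_le_sum_abs _ _
    _ ≤ ∑ _σ : Equiv.Perm ι, (∏ i, r i) * ∏ j, c j := Finset.sum_le_sum fun σ _ => term_le σ
    _ = (Fintype.card ι).factorial * ((∏ i, r i) * ∏ j, c j) := by
        rw [Finset.sum_const, Finset.card_univ, Fintype.card_perm, nsmul_eq_mul]

/-- `a`, `b`, `d`, `e` stand for the logarithms of the heights of the minimal points `p + 1`,
`p + 2`, `q + 1`, `q + 2`. -/
theorem mul_le_two_mul_of_det_of_minor {α g a b d e c : ℝ} (hg : 0 ≤ g) (hgα : g + 1 < α)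
    (hb : b ≤ g * a) (he : e ≤ g * d) (hc : 0 ≤ c) (hdet : α * a ≤ a + b + e + c)
    (hminor : (α - 1) * d ≤ g * α * a - b + c) : (α - 1 - g - g ^ 2) * a ≤ 2 * c := by
  have hα : 0 < α - 1 := by linarith
  refine le_of_mul_le_mul_left ?_ hα
  have hd := mul_le_mul_of_nonneg_left hminor hg
  have hdet' := mul_le_mul_of_nonneg_left (hdet.trans
    (by gcongr : a + b + e + c ≤ a + b + g * d + c)) hα.le
  have hb' := mul_le_mul_of_nonneg_left hb (by linarith : 0 ≤ α - 1 - g)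
  have hc' := mul_le_mul_of_nonneg_right (by linarith : g ≤ α - 1) hc
  linarith

theorem det_of_cons_sub_smul {n : ℕ} {R : Type*} [CommRing R] (v w : Fin (n + 1) → R) (c : R)
    (T : Fin n → Fin (n + 1) → R) :
    (Matrix.of (Fin.cons (v - c • w) T)).det =
      (Matrix.of (Fin.cons v T)).det - c * (Matrix.of (Fin.cons w T)).det := by
  have hlin := Matrix.detRowAlternating.toMultilinearMap.cons_add T v (-c • w)
  rw [MultilinearMap.cons_smul, neg_smul, ← sub_eq_add_neg, neg_smul, ← sub_eq_add_neg] at hlin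
  exact hlin

theorem eq_top_of_det_ne_zero {ι K : Type*} [Fintype ι] [DecidableEq ι] [Field K]
    {S : Submodule K (ι → K)} {A : Matrix ι ι K} (hA : A.det ≠ 0) (hS : ∀ i, A i ∈ S) : S = ⊤ := by
  refine top_unique ?_
  rw [← (Matrix.linearIndependent_rows_of_det_ne_zero hA).span_eq_top_of_card_eq_finrank' (by simp),
    Submodule.span_le]
  rintro _ ⟨i, rfl⟩
  exact hS i

theorem exists_int_abs_sub_mul_eq {a b : ℝ} (h : |b| ≤ |a|) :
    ∃ s : ℤ, |b - s * a| = |a| - |b| := by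
  have hsign : |b - a| = |a| - |b| ∨ |b + a| = |a| - |b| := by grind
  rcases hsign with hs | hs
  · exact ⟨1, by simpa using hs⟩
  · exact ⟨-1, by simpa using hs⟩

section LinearForm

variable {m : ℕ} {θ : Fin m → ℝ}

/-- The value `X₀ + θ¹X₁ + ⋯ + θᵐXₘ` of the affine form at an integer vector; minimizing its
absolute value over `X₀` gives `‖θ¹X₁ + ⋯ + θᵐXₘ‖`. -/
noncomputable def linForm (θ : Fin m → ℝ) : (Fin (m + 1) → ℤ) →+ ℝ where
  toFun X := X 0 + ∑ j, θ j * X j.succ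
  map_zero' := by simp
  map_add' X Y := by
    simp only [Pi.add_apply, Int.cast_add, mul_add, Finset.sum_add_distrib]
    ring

/-- The variables `(X₁, …, Xₘ)` of the linear form, as a real vector. -/
def coordVec : (Fin (m + 1) → ℤ) →+ (Fin m → ℝ) where
  toFun X j := X j.succ
  map_zero' := by ext; simp
  map_add' X Y := by ext; simp

/-- The size `max |Xⱼ|` of the variables of the linear form; the coordinate `X₀` is ignored. -/
def height (X : Fin (m + 1) → ℤ) : ℕ := Finset.univ.sup fun j : Fin m => (X j.succ).natAbs

/-- The integer vector `X` with its coordinate `X₀` replaced by the value of the form. These vectors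
form a lattice of determinant one, in which small vectors are good approximations. -/
noncomputable def formVec (θ : Fin m → ℝ) (X : Fin (m + 1) → ℤ) : Fin (m + 1) → ℝ :=
  Fin.cons (linForm θ X) (coordVec X)

theorem linForm_apply (X : Fin (m + 1) → ℤ) : linForm θ X = X 0 + ∑ j, θ j * X j.succ := rfl

@[simp]
theorem coordVec_apply (X : Fin (m + 1) → ℤ) (j : Fin m) : coordVec X j = X j.succ := rfl

@[simp]
theorem formVec_zero (X : Fin (m + 1) → ℤ) : formVec θ X 0 = linForm θ X := rfl

@[simp]
theorem formVec_succ (X : Fin (m + 1) → ℤ) (j : Fin m) : formVec θ X j.succ = X j.succ := rfl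

theorem height_le_iff {X : Fin (m + 1) → ℤ} {n : ℕ} :
    height X ≤ n ↔ ∀ j : Fin m, |X j.succ| ≤ n := by
  simp only [height, Finset.sup_le_iff, Finset.mem_univ, true_imp_iff, Int.abs_eq_natAbs,
    Nat.cast_le]

theorem norm_coordVec (X : Fin (m + 1) → ℤ) : ‖coordVec X‖ = height X := by
  apply le_antisymm
  · refine (pi_norm_le_iff_of_nonneg (Nat.cast_nonneg _)).2 fun j => ?_
    rw [coordVec_apply, Real.norm_eq_abs, ← Int.cast_abs]
    exact_mod_cast height_le_iff.1 le_rfl j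
  · refine (Nat.cast_le.2 (Finset.sup_le fun j _ => Nat.le_floor ?_)).trans
      (Nat.floor_le (norm_nonneg _))
    simpa [Nat.cast_natAbs, Real.norm_eq_abs] using norm_le_pi_norm (coordVec X) j

theorem abs_intCast_succ_le_height (X : Fin (m + 1) → ℤ) (j : Fin m) :
    |(X j.succ : ℝ)| ≤ height X :=
  norm_coordVec X ▸ norm_le_pi_norm (coordVec X) j

theorem height_pos_of_abs_linForm_lt_one {X : Fin (m + 1) → ℤ} (hX : X ≠ 0)
    (h : |linForm θ X| < 1) : 0 < height X := by
  by_contra! h0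
  have hsucc (j : Fin m) : X j.succ = 0 := by simpa using height_le_iff.1 h0 j
  have hzero : X 0 = 0 := by
    rw [← Int.abs_lt_one_iff]
    simp only [linForm_apply, hsucc, Int.cast_zero, mul_zero, Finset.sum_const_zero, add_zero] at h
    exact_mod_cast h
  exact hX (funext (Fin.cases hzero hsucc))

theorem finite_setOf_height_le_abs_linForm_lt (θ : Fin m → ℝ) (n : ℕ) (r : ℝ) :
    {X : Fin (m + 1) → ℤ | height X ≤ n ∧ |linForm θ X| < r}.Finite := by
  obtain ⟨B, hB⟩ := exists_nat_ge (r + ∑ j, |θ j| * n)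
  refine (Set.finite_Icc (Fin.cons (-B) fun _ => -n : Fin (m + 1) → ℤ)
    (Fin.cons B fun _ => n)).subset ?_
  rintro X ⟨hn, hr⟩
  have hsucc (j : Fin m) : |X j.succ| ≤ n := height_le_iff.1 hn j
  have hzero : |X 0| ≤ B := by
    have hsum : |∑ j, θ j * X j.succ| ≤ ∑ j, |θ j| * n := by
      refine (Finset.abs_sum_le_sum_abs _ _).trans (Finset.sum_le_sum fun j _ => ?_)
      rw [abs_mul]
      gcongr
      exact_mod_cast hsucc j
    have htri := abs_sub (linForm θ X) (∑ j, θ j * X j.succ)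
    rw [linForm_apply, add_sub_cancel_right] at htri
    rw [linForm_apply] at hr
    exact_mod_cast (by linarith : |(X 0 : ℝ)| ≤ B)
  simp only [abs_le] at hsucc hzero
  exact ⟨Fin.cases hzero.1 fun j => (hsucc j).1, Fin.cases hzero.2 fun j => (hsucc j).2⟩

/-- Dirichlet's theorem for a linear form: two of the `(N + 1) ^ m` points with coordinates in
`{0, …, N}` have values in the same of `N ^ m` intervals modulo `1`. -/
theorem exists_abs_linForm_lt_one_div_pow [NeZero m] (θ : Fin m → ℝ) {N : ℕ} (hN : 0 < N) :
    ∃ X, 0 < height X ∧ height X ≤ N ∧ |linForm θ X| < 1 / (N : ℝ) ^ m := by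
  have hNm : (0 : ℝ) < (N : ℝ) ^ m := by positivity
  let value (x : Fin m → Fin (N + 1)) : ℝ := ∑ j, θ j * (x j : ℕ)
  let box (x : Fin m → Fin (N + 1)) : Fin (N ^ m) :=
    ⟨⌊Int.fract (value x) * N ^ m⌋₊, (Nat.floor_lt (by positivity)).2 (by
      push_cast
      exact mul_lt_of_lt_one_left hNm (Int.fract_lt_one _))⟩
  obtain ⟨x, y, hxy, hbox⟩ := Fintype.exists_ne_map_eq_of_card_lt box (by
    simpa using Nat.pow_lt_pow_left N.lt_succ_self (NeZero.ne m))
  let X : Fin (m + 1) → ℤ :=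
    Fin.cons (⌊value y⌋ - ⌊value x⌋) fun j => ((x j : ℕ) : ℤ) - (y j : ℕ)
  have hform : linForm θ X = Int.fract (value x) - Int.fract (value y) := by
    simp only [linForm_apply, X, Fin.cons_zero, Fin.cons_succ, Int.fract, value]
    push_cast
    simp only [mul_sub, Finset.sum_sub_distrib]
    ring
  have hlt : |linForm θ X| < 1 / (N : ℝ) ^ m := by
    have hfloor : ⌊Int.fract (value x) * N ^ m⌋ = ⌊Int.fract (value y) * N ^ m⌋ := by
      rw [← Int.natCast_floor_eq_floor (by positivity),
        ← Int.natCast_floor_eq_floor (by positivity)]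
      exact congrArg _ (Fin.mk.inj hbox)
    have hscaled := Int.abs_sub_lt_one_of_floor_eq_floor hfloor
    rwa [← sub_mul, ← hform, abs_mul, abs_of_pos hNm, ← lt_div_iff₀ hNm] at hscaled
  refine ⟨X, Nat.pos_of_ne_zero fun h0 => hxy (funext fun j => ?_),
    height_le_iff.2 fun j => ?_, hlt⟩
  · have hj : X j.succ = 0 := by simpa using height_le_iff.1 h0.le j
    simp only [X, Fin.cons_succ] at hj
    omega
  · simp only [X, Fin.cons_succ, abs_le]
    omega

theorem exists_abs_linForm_lt [NeZero m] (θ : Fin m → ℝ) {ε : ℝ} (hε : 0 < ε) :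
    ∃ X, 0 < height X ∧ |linForm θ X| < ε := by
  obtain ⟨n, hn⟩ := exists_nat_one_div_lt hε
  obtain ⟨X, hX, -, hlt⟩ := exists_abs_linForm_lt_one_div_pow θ n.succ_pos
  refine ⟨X, hX, hlt.trans (lt_of_le_of_lt ?_ hn)⟩
  have hone : (1 : ℝ) ≤ (n + 1 : ℕ) := by exact_mod_cast n.succ_pos
  rw [← Nat.cast_succ]
  gcongr
  exact le_self_pow₀ hone (NeZero.ne m)

theorem exists_isLeast_abs_linForm [NeZero m] (θ : Fin m → ℝ) {n : ℕ} (hn : 0 < n) :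
    ∃ X, 0 < height X ∧ height X ≤ n ∧
      ∀ Y ≠ 0, height Y ≤ n → |linForm θ X| ≤ |linForm θ Y| := by
  have h1 : 1 / (n : ℝ) ^ m ≤ 1 :=
    (div_le_one (by positivity)).2 (one_le_pow₀ (by exact_mod_cast hn))
  obtain ⟨X₀, hX₀, hX₀n, hX₀lt⟩ := exists_abs_linForm_lt_one_div_pow θ hn
  obtain ⟨X, ⟨hX, hXn, hXlt⟩, hmin⟩ := Set.exists_min_image
    {X | 0 < height X ∧ height X ≤ n ∧ |linForm θ X| < 1} (fun X => |linForm θ X|)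
    ((finite_setOf_height_le_abs_linForm_lt θ n 1).subset fun _ h => h.2)
    ⟨X₀, hX₀, hX₀n, hX₀lt.trans_le h1⟩
  refine ⟨X, hX, hXn, fun Y hY hYn => ?_⟩
  by_contra! hlt
  have hYlt := hlt.trans hXlt
  exact (hmin Y ⟨height_pos_of_abs_linForm_lt_one hY hYlt, hYn, hYlt⟩).not_gt hlt

theorem det_formVec (θ : Fin m → ℝ) (Y : Fin (m + 1) → Fin (m + 1) → ℤ) :
    (Matrix.of fun i => formVec θ (Y i)).det = ((Matrix.of Y).det : ℝ) := by
  let A : Matrix (Fin (m + 1)) (Fin (m + 1)) ℝ := (Matrix.of Y).map (Int.cast : ℤ → ℝ)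
  have hcol : (Matrix.of fun i => formVec θ (Y i)) =
      A.updateCol 0 fun i => ∑ j, (Fin.cons 1 θ : Fin (m + 1) → ℝ) j • A i j := by
    ext i j
    refine Fin.cases ?_ (fun j => ?_) j
    · simp [A, Fin.sum_univ_succ, linForm_apply]
    · simp [A]
  rw [hcol, Matrix.det_updateCol_sum, Fin.cons_zero, one_smul]
  exact ((Int.castRingHom ℝ).map_det _).symm

theorem one_le_abs_det_formVec {Y : Fin (m + 1) → Fin (m + 1) → ℤ}
    (h : LinearIndependent ℝ fun i => formVec θ (Y i)) :
    1 ≤ |(Matrix.of fun i => formVec θ (Y i)).det| := by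
  have hdet : (Matrix.of fun i => formVec θ (Y i)).det ≠ 0 :=
    ((Matrix.isUnit_iff_isUnit_det _).1 (Matrix.linearIndependent_rows_iff_isUnit.1 h)).ne_zero
  rw [det_formVec] at hdet ⊢
  exact_mod_cast Int.one_le_abs (Int.cast_ne_zero.1 hdet)

theorem exists_formVec_notMem (θ : Fin m → ℝ) {S : Submodule ℝ (Fin (m + 1) → ℝ)} (hS : S ≠ ⊤) :
    ∃ Y, formVec θ Y ∉ S := by
  by_contra! hmem
  have hone : Matrix.of (fun i : Fin (m + 1) => Pi.single i (1 : ℤ)) = 1 := by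
    ext i j
    simp [Matrix.one_apply, Pi.single_apply, eq_comm]
  refine hS (eq_top_of_det_ne_zero (A := Matrix.of fun i => formVec θ (Pi.single i 1)) ?_
    fun i => hmem _)
  rw [det_formVec, hone, Matrix.det_one, Int.cast_one]
  exact one_ne_zero

/-- The vector of `2 × 2` minors of the matrix with rows `formVec θ X` and `formVec θ Y` that
involve its first column. -/
noncomputable def formMinor (θ : Fin m → ℝ) (X Y : Fin (m + 1) → ℤ) : Fin m → ℝ :=
  linForm θ X • coordVec Y - linForm θ Y • coordVec X

theorem formMinor_zsmul_add_zsmul (X Y : Fin (m + 1) → ℤ) (a b : ℤ) :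
    formMinor θ Y (a • X + b • Y) = -((a : ℝ) • formMinor θ X Y) := by
  simp only [formMinor, map_add, map_zsmul, ← Int.cast_smul_eq_zsmul ℝ, smul_eq_mul]
  module

theorem formMinor_sub_zsmul (X Y : Fin (m + 1) → ℤ) (s : ℤ) :
    formMinor θ X (Y - s • X) = formMinor θ X Y := by
  simp only [formMinor, map_sub, map_zsmul, ← Int.cast_smul_eq_zsmul ℝ, smul_eq_mul]
  module

theorem norm_formMinor_le (X Y : Fin (m + 1) → ℤ) :
    ‖formMinor θ X Y‖ ≤ |linForm θ X| * height Y + |linForm θ Y| * height X := by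
  refine (norm_sub_le _ _).trans_eq ?_
  simp only [norm_smul, norm_coordVec, Real.norm_eq_abs]

theorem le_norm_formMinor (X Y : Fin (m + 1) → ℤ) :
    |linForm θ X| * height Y - |linForm θ Y| * height X ≤ ‖formMinor θ X Y‖ := by
  refine Eq.trans_le ?_ (norm_sub_norm_le _ _)
  simp only [norm_smul, norm_coordVec, Real.norm_eq_abs]

theorem linearIndependent_pair_of_formMinor_ne_zero {X Y : Fin (m + 1) → ℤ}
    (h : formMinor θ X Y ≠ 0) : LinearIndependent ℝ ![formVec θ X, formVec θ Y] := by
  rw [LinearIndependent.pair_iff]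
  intro s t hst
  have hform : s * linForm θ X + t * linForm θ Y = 0 := congrFun hst 0
  have hcoord : s • coordVec X + t • coordVec Y = 0 := funext fun j => congrFun hst j.succ
  have hs : s • formMinor θ X Y = (s * linForm θ X + t * linForm θ Y) • coordVec Y
      - linForm θ Y • (s • coordVec X + t • coordVec Y) := by
    rw [formMinor]
    module
  have ht : t • formMinor θ X Y = linForm θ X • (s • coordVec X + t • coordVec Y)
      - (s * linForm θ X + t * linForm θ Y) • coordVec X := by
    rw [formMinor]
    module
  rw [hform, hcoord, zero_smul, smul_zero, sub_zero] at hs ht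
  exact ⟨(smul_eq_zero.1 hs).resolve_right h, (smul_eq_zero.1 ht).resolve_right h⟩

section MinimalPoints

/-- A minimal point of the form: its value cannot be improved by a nonzero integer vector that is
not higher. -/
def IsMinimalPoint (θ : Fin m → ℝ) (X : Fin (m + 1) → ℤ) : Prop :=
  0 < height X ∧ ∀ Y ≠ 0, height Y ≤ height X → |linForm θ X| ≤ |linForm θ Y|

/-- A sequence of consecutive minimal points of the form: none is skipped, since no lower point
than `X (i + 1)` improves on `X i`. -/
structure IsMinimalSeq (θ : Fin m → ℝ) (X : ℕ → Fin (m + 1) → ℤ) : Prop where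
  height_pos : ∀ i, 0 < height (X i)
  height_lt : ∀ i, height (X i) < height (X (i + 1))
  form_lt : ∀ i, |linForm θ (X (i + 1))| < |linForm θ (X i)|
  le_form : ∀ i, ∀ Y ≠ 0, height Y < height (X (i + 1)) → |linForm θ (X i)| ≤ |linForm θ Y|

/-- Three consecutive points of a sequence, as vectors of the lattice. The last one comes first, so
that its independence of the other two is that of the head of the family. -/
noncomputable def triple (θ : Fin m → ℝ) (X : ℕ → Fin (m + 1) → ℤ) (i : ℕ) :
    Fin 3 → Fin (m + 1) → ℝ :=
  ![formVec θ (X (i + 2)), formVec θ (X i), formVec θ (X (i + 1))]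

theorem ne_zero_of_height_pos {X : Fin (m + 1) → ℤ} (hX : 0 < height X) : X ≠ 0 := by
  rintro rfl
  simp [height] at hX

theorem exists_isMinimalPoint [NeZero m] (θ : Fin m → ℝ) : ∃ X, IsMinimalPoint θ X := by
  obtain ⟨X, hX, hX1, hmin⟩ := exists_isLeast_abs_linForm θ one_pos
  exact ⟨X, hX, fun Y hY hYX => hmin Y hY (hYX.trans hX1)⟩

theorem IsMinimalPoint.height_lt_height {X Y : Fin (m + 1) → ℤ} (hX : IsMinimalPoint θ X)
    (hY : Y ≠ 0) (hlt : |linForm θ Y| < |linForm θ X|) : height X < height Y := by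
  by_contra! hle
  exact (hX.2 Y hY hle).not_gt hlt

theorem IsMinimalPoint.exists_next [NeZero m] {X : Fin (m + 1) → ℤ} (hX : IsMinimalPoint θ X)
    (hne : linForm θ X ≠ 0) :
    ∃ X', IsMinimalPoint θ X' ∧ |linForm θ X'| < |linForm θ X| ∧
      ∀ Y ≠ 0, height Y < height X' → |linForm θ X| ≤ |linForm θ Y| := by
  classical
  have hex : ∃ n, ∃ Y ≠ 0, height Y = n ∧ |linForm θ Y| < |linForm θ X| := by
    obtain ⟨Y, hY, hlt⟩ := exists_abs_linForm_lt θ (abs_pos.2 hne)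
    exact ⟨_, Y, ne_zero_of_height_pos hY, rfl, hlt⟩
  obtain ⟨Y₀, hY₀, hheight, hlt⟩ := Nat.find_spec hex
  have hpos : 0 < height Y₀ := hX.1.trans (hX.height_lt_height hY₀ hlt)
  obtain ⟨X', hX', hX'Y₀, hmin⟩ := exists_isLeast_abs_linForm θ hpos
  refine ⟨X', ⟨hX', fun Y hY hYX' => hmin Y hY (hYX'.trans hX'Y₀)⟩,
    (hmin Y₀ hY₀ le_rfl).trans_lt hlt, fun Y hY hYX' => ?_⟩
  by_contra! hYX
  exact Nat.find_min hex (hheight ▸ hYX'.trans_le hX'Y₀) ⟨Y, hY, rfl, hYX⟩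

theorem exists_isMinimalSeq [NeZero m] (hθ : ∀ Y, 0 < height Y → linForm θ Y ≠ 0) :
    ∃ X, IsMinimalSeq θ X := by
  obtain ⟨X₀, hX₀⟩ := exists_isMinimalPoint θ
  choose next hmin hlt hle using fun X : {X // IsMinimalPoint θ X} =>
    X.2.exists_next (hθ X.1 X.2.1)
  let X (i : ℕ) : {X // IsMinimalPoint θ X} := (fun X => ⟨next X, hmin X⟩)^[i] ⟨X₀, hX₀⟩
  have hX (i : ℕ) : (X (i + 1)).1 = next (X i) :=
    congrArg Subtype.val (Function.iterate_succ_apply' _ i _)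
  refine ⟨fun i => X i, fun i => (X i).2.1, fun i => ?_, fun i => ?_, fun i => ?_⟩
  · refine (X i).2.height_lt_height (ne_zero_of_height_pos (X (i + 1)).2.1) ?_
    exact hX i ▸ hlt (X i)
  · exact hX i ▸ hlt (X i)
  · simp only [hX i]
    exact hle (X i)

theorem exists_formVec_notMem_span_triple {X : ℕ → Fin (m + 1) → ℤ} {p : ℕ}
    (hp : LinearIndependent ℝ (triple θ X p))
    (hescape : ∃ i ≥ p, formVec θ (X i) ∉ Submodule.span ℝ (Set.range (triple θ X p))) :
    ∃ p' ≥ p, ∃ q > p', LinearIndependent ℝ (triple θ X p') ∧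
      formVec θ (X (q + 2)) ∉ Submodule.span ℝ (Set.range (triple θ X p')) ∧
      ∀ i, p' < i → i < q → ¬LinearIndependent ℝ (triple θ X i) := by
  classical
  set S := Submodule.span ℝ (Set.range (triple θ X p))
  have htriple (i : ℕ) : Set.range (triple θ X i) ⊆ S ↔
      formVec θ (X (i + 2)) ∈ S ∧ formVec θ (X i) ∈ S ∧ formVec θ (X (i + 1)) ∈ S := by
    simp only [Set.range_subset_iff, Fin.forall_fin_succ, IsEmpty.forall_iff, and_true]
    rfl
  have hpS := (htriple p).1 Submodule.subset_span
  obtain ⟨hpk, hk⟩ := Nat.find_spec hescape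
  have hmin (i : ℕ) (hpi : p ≤ i) (hi : i < Nat.find hescape) : formVec θ (X i) ∈ S := by
    by_contra hiS
    exact Nat.find_min hescape hi ⟨hpi, hiS⟩
  have hp0 : Nat.find hescape ≠ p := fun h => (h ▸ hk) hpS.2.1
  have hp1 : Nat.find hescape ≠ p + 1 := fun h => (h ▸ hk) hpS.2.2
  have hp2 : Nat.find hescape ≠ p + 2 := fun h => (h ▸ hk) hpS.1
  have hge : 3 ≤ Nat.find hescape := by omega
  obtain ⟨q, hq⟩ := Nat.exists_eq_add_of_le' hge
  rw [hq] at hk hmin hp0 hp1 hp2 hpk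
  -- `p'` is the last index before the escape from `S` whose triple is independent and so spans `S`.
  have hlast := Nat.findGreatest_spec (P := fun i => p ≤ i ∧ LinearIndependent ℝ (triple θ X i))
    (n := q) (m := p) (by omega) ⟨le_rfl, hp⟩
  set p' := Nat.findGreatest (fun i => p ≤ i ∧ LinearIndependent ℝ (triple θ X i)) q
  have hp'q : p' ≤ q := Nat.findGreatest_le q
  refine ⟨p', hlast.1, q + 1, by omega, hlast.2, fun hmem => hk ?_, fun i hpi hiq hi => ?_⟩
  · refine Submodule.span_le.2 ((htriple p').2 ⟨?_, ?_, ?_⟩) hmem <;>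
      exact hmin _ (by omega) (by omega)
  · exact Nat.findGreatest_is_greatest hpi (by omega) ⟨by omega, hi⟩

namespace IsMinimalSeq

variable {X : ℕ → Fin (m + 1) → ℤ} {i : ℕ}

theorem height_cast_pos (hX : IsMinimalSeq θ X) (i : ℕ) : (0 : ℝ) < height (X i) :=
  Nat.cast_pos.2 (hX.height_pos i)

theorem height_cast_lt (hX : IsMinimalSeq θ X) (i : ℕ) : (height (X i) : ℝ) < height (X (i + 1)) :=
  Nat.cast_lt.2 (hX.height_lt i)

theorem abs_form_pos (hX : IsMinimalSeq θ X) (i : ℕ) : 0 < |linForm θ (X i)| :=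
  (abs_nonneg _).trans_lt (hX.form_lt i)

theorem strictMono_height (hX : IsMinimalSeq θ X) : StrictMono fun i => height (X i) :=
  strictMono_nat_of_lt_succ hX.height_lt

theorem strictAnti_abs_form (hX : IsMinimalSeq θ X) : StrictAnti fun i => |linForm θ (X i)| :=
  strictAnti_nat_of_succ_lt hX.form_lt

theorem eq_zero_of_height_lt_of_form_lt (hX : IsMinimalSeq θ X) {Y : Fin (m + 1) → ℤ}
    (hheight : height Y < height (X (i + 1))) (hform : |linForm θ Y| < |linForm θ (X i)|) :
    Y = 0 := by
  by_contra hY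
  exact (hX.le_form i Y hY hheight).not_gt hform

theorem exists_eq_zsmul_add_zsmul (hX : IsMinimalSeq θ X) {Y : Fin (m + 1) → ℤ}
    (hY : formVec θ Y ∈ Submodule.span ℝ {formVec θ (X i), formVec θ (X (i + 1))}) :
    ∃ a b : ℤ, Y = a • X i + b • X (i + 1) := by
  obtain ⟨s, t, hst⟩ := Submodule.mem_span_pair.1 hY
  -- Rounding the coefficients leaves a remainder that is too small to be nonzero.
  let Z := Y - (round s • X i + round t • X (i + 1))
  have hform : linForm θ Z =
      (s - round s) * linForm θ (X i) + (t - round t) * linForm θ (X (i + 1)) := by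
    have h0 : s * linForm θ (X i) + t * linForm θ (X (i + 1)) = linForm θ Y := congrFun hst 0
    simp only [Z, map_sub, map_add, map_zsmul, ← Int.cast_smul_eq_zsmul ℝ, smul_eq_mul, ← h0]
    ring
  have hcoord : coordVec Z =
      (s - round s) • coordVec (X i) + (t - round t) • coordVec (X (i + 1)) := by
    have h0 : s • coordVec (X i) + t • coordVec (X (i + 1)) = coordVec Y :=
      funext fun j => congrFun hst j.succ
    simp only [Z, map_sub, map_add, map_zsmul, ← Int.cast_smul_eq_zsmul ℝ, ← h0]
    module
  have hs := abs_sub_round s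
  have ht := abs_sub_round t
  have hZ : Z = 0 := by
    refine hX.eq_zero_of_height_lt_of_form_lt (i := i) ?_ ?_
    · rw [← Nat.cast_lt (α := ℝ), ← norm_coordVec, hcoord]
      calc _ ≤ |s - round s| * height (X i) + |t - round t| * height (X (i + 1)) := by
            refine (norm_add_le _ _).trans_eq ?_
            simp only [norm_smul, norm_coordVec, Real.norm_eq_abs]
        _ ≤ 1 / 2 * height (X i) + 1 / 2 * height (X (i + 1)) := by gcongr
        _ < height (X (i + 1)) := by linarith [hX.height_cast_lt i]
    · rw [hform]
      calc _ ≤ |s - round s| * |linForm θ (X i)| + |t - round t| * |linForm θ (X (i + 1))| := by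
            refine (abs_add_le _ _).trans_eq ?_
            simp only [abs_mul]
        _ ≤ 1 / 2 * |linForm θ (X i)| + 1 / 2 * |linForm θ (X (i + 1))| := by gcongr
        _ < |linForm θ (X i)| := by linarith [hX.form_lt i]
  exact ⟨round s, round t, sub_eq_zero.1 hZ⟩

theorem norm_formMinor_le_two_mul (hX : IsMinimalSeq θ X) (i : ℕ) :
    ‖formMinor θ (X i) (X (i + 1))‖ ≤ 2 * (|linForm θ (X i)| * height (X (i + 1))) := by
  have h := mul_le_mul (hX.form_lt i).le (hX.height_cast_lt i).le (Nat.cast_nonneg _) (abs_nonneg _)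
  linarith [norm_formMinor_le (θ := θ) (X i) (X (i + 1))]

theorem form_mul_height_le_two_mul_norm_formMinor (hX : IsMinimalSeq θ X) (i : ℕ) :
    |linForm θ (X i)| * height (X (i + 1)) ≤ 2 * ‖formMinor θ (X i) (X (i + 1))‖ := by
  obtain ⟨s, hs⟩ := exists_int_abs_sub_mul_eq (hX.form_lt i).le
  -- `W` has a smaller value than `X i`, so it must be at least as high as `X (i + 1)`.
  let W := X (i + 1) - s • X i
  have hform : |linForm θ W| = |linForm θ (X i)| - |linForm θ (X (i + 1))| := by
    rw [← hs, map_sub, map_zsmul, zsmul_eq_mul]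
  have hW : W ≠ 0 := fun h0 => by
    rw [h0, map_zero, abs_zero] at hform
    linarith [hX.form_lt i]
  have hheight : (height (X (i + 1)) : ℝ) ≤ height W := by
    by_contra! hlt
    refine hW (hX.eq_zero_of_height_lt_of_form_lt (Nat.cast_lt.1 hlt) (hform ▸ ?_))
    linarith [hX.abs_form_pos (i + 1)]
  have hnext := le_norm_formMinor (θ := θ) (X i) (X (i + 1))
  have hdiff := le_norm_formMinor (θ := θ) (X i) W
  rw [formMinor_sub_zsmul, hform] at hdiff
  nlinarith [mul_le_mul_of_nonneg_left ((hX.height_cast_lt i).le.trans hheight)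
    (abs_nonneg (linForm θ (X i)))]

theorem formMinor_ne_zero (hX : IsMinimalSeq θ X) (i : ℕ) :
    formMinor θ (X i) (X (i + 1)) ≠ 0 := by
  intro h0
  have h := hX.form_mul_height_le_two_mul_norm_formMinor i
  rw [h0, norm_zero, mul_zero] at h
  exact h.not_gt (mul_pos (hX.abs_form_pos i) (hX.height_cast_pos (i + 1)))

theorem tendsto_height_cast (hX : IsMinimalSeq θ X) :
    Tendsto (fun i => (height (X i) : ℝ)) atTop atTop :=
  tendsto_natCast_atTop_atTop.comp hX.strictMono_height.tendsto_atTop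

theorem tendsto_log_height (hX : IsMinimalSeq θ X) :
    Tendsto (fun i => Real.log (height (X i))) atTop atTop :=
  Real.tendsto_log_atTop.comp hX.tendsto_height_cast

theorem log_form_mul_height (hX : IsMinimalSeq θ X) (i j : ℕ) :
    Real.log (|linForm θ (X i)| * height (X j)) =
      Real.log |linForm θ (X i)| + Real.log (height (X j)) :=
  Real.log_mul (hX.abs_form_pos i).ne' (hX.height_cast_pos j).ne'

theorem tendsto_form_mul_height_mul_height (hX : IsMinimalSeq θ X) {α g : ℝ} (hgα : g + 1 < α)
    (hform : ∀ᶠ i in atTop, α * Real.log (height (X (i + 1))) ≤ -Real.log |linForm θ (X i)|)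
    (hstep : ∀ᶠ i in atTop, Real.log (height (X (i + 1))) ≤ g * Real.log (height (X i))) :
    Tendsto (fun i => |linForm θ (X i)| * height (X (i + 1)) * height (X (i + 2))) atTop
      (nhds 0) := by
  have hlog : Tendsto (fun i => (g + 1 - α) * Real.log (height (X (i + 1)))) atTop atBot :=
    ((tendsto_add_atTop_iff_nat 1).2 hX.tendsto_log_height).const_mul_atTop_of_neg (by linarith)
  refine squeeze_zero' (.of_forall fun i => by positivity) ?_ (Real.tendsto_exp_atBot.comp hlog)
  filter_upwards [hform, (tendsto_add_atTop_nat 1).eventually hstep] with i hi hi1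
  have hpos := mul_pos (hX.abs_form_pos i) (hX.height_cast_pos (i + 1))
  rw [Function.comp_apply, ← Real.log_le_iff_le_exp (mul_pos hpos (hX.height_cast_pos (i + 2))),
    Real.log_mul hpos.ne' (hX.height_cast_pos (i + 2)).ne', hX.log_form_mul_height]
  linarith

theorem linearIndependent_triple_iff (hX : IsMinimalSeq θ X) : LinearIndependent ℝ (triple θ X i) ↔
    formVec θ (X (i + 2)) ∉ Submodule.span ℝ {formVec θ (X i), formVec θ (X (i + 1))} := by
  rw [← Matrix.range_cons_cons_empty, triple, Matrix.vecCons, linearIndependent_finCons]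
  exact and_iff_right (linearIndependent_pair_of_formMinor_ne_zero (hX.formMinor_ne_zero i))

theorem norm_formMinor_le_succ (hX : IsMinimalSeq θ X)
    (hi : ¬LinearIndependent ℝ (triple θ X i)) :
    ‖formMinor θ (X i) (X (i + 1))‖ ≤ ‖formMinor θ (X (i + 1)) (X (i + 2))‖ := by
  rw [hX.linearIndependent_triple_iff, not_not] at hi
  obtain ⟨a, b, hab⟩ := hX.exists_eq_zsmul_add_zsmul hi
  have hminor := formMinor_zsmul_add_zsmul (θ := θ) (X i) (X (i + 1)) a b
  rw [← hab] at hminor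
  have ha : a ≠ 0 := by
    rintro rfl
    exact hX.formMinor_ne_zero (i + 1) (by simpa using hminor)
  rw [hminor, norm_neg, norm_smul, Real.norm_eq_abs]
  exact le_mul_of_one_le_left (norm_nonneg _) (by exact_mod_cast Int.one_le_abs ha)

theorem form_mul_height_le (hX : IsMinimalSeq θ X) {p q : ℕ} (hpq : p ≤ q)
    (hdep : ∀ i, p ≤ i → i < q → ¬LinearIndependent ℝ (triple θ X i)) :
    |linForm θ (X p)| * height (X (p + 1)) ≤ 4 * (|linForm θ (X q)| * height (X (q + 1))) := by
  have hmono : ‖formMinor θ (X p) (X (p + 1))‖ ≤ ‖formMinor θ (X q) (X (q + 1))‖ := by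
    induction q, hpq using Nat.le_induction with
    | base => rfl
    | succ q hpq ih =>
      exact (ih fun i hpi hiq => hdep i hpi (hiq.trans q.lt_succ_self)).trans
        (hX.norm_formMinor_le_succ (hdep q hpq q.lt_succ_self))
  linarith [hX.form_mul_height_le_two_mul_norm_formMinor p, hX.norm_formMinor_le_two_mul q]

theorem frequently_linearIndependent_triple (hX : IsMinimalSeq θ X)
    (hlim : Tendsto (fun i => |linForm θ (X i)| * height (X (i + 1))) atTop (nhds 0)) :
    ∃ᶠ i in atTop, LinearIndependent ℝ (triple θ X i) := by
  intro hdep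
  obtain ⟨p, hp⟩ := eventually_atTop.1 hdep
  have hpos := mul_pos (hX.abs_form_pos p) (hX.height_cast_pos (p + 1))
  obtain ⟨q, hpq, hq⟩ := ((eventually_ge_atTop p).and
    (hlim.eventually_lt_const (by linarith : (0 : ℝ) <
      (|linForm θ (X p)| * height (X (p + 1))) / 4))).exists
  linarith [hX.form_mul_height_le hpq fun i hpi _ => hp i hpi]

theorem abs_formVec_le (hX : IsMinimalSeq θ X) {k : ℕ} (hik : i ≤ k) (j : Fin (m + 1)) :
    |formVec θ (X k) j| ≤
      height (X k) * (Fin.cons (|linForm θ (X i)| / height (X i)) 1 : Fin (m + 1) → ℝ) j := by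
  cases j using Fin.cases with
  | zero =>
    rw [formVec_zero, Fin.cons_zero, mul_div_left_comm]
    refine (hX.strictAnti_abs_form.antitone hik).trans (le_mul_of_one_le_right (abs_nonneg _) ?_)
    exact (one_le_div (hX.height_cast_pos i)).2
      (Nat.cast_le.2 (hX.strictMono_height.monotone hik))
  | succ j =>
    rw [formVec_succ, Fin.cons_succ, Pi.one_apply, mul_one]
    exact abs_intCast_succ_le_height (X k) j

end IsMinimalSeq

end MinimalPoints

end LinearForm

section ThreeVariables

variable {θ : Fin 3 → ℝ} {X : ℕ → Fin 4 → ℤ} {i p : ℕ}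

theorem one_le_abs_det_cons_triple (hi : LinearIndependent ℝ (triple θ X i)) {Y : Fin 4 → ℤ}
    (hY : formVec θ Y ∉ Submodule.span ℝ (Set.range (triple θ X i))) :
    1 ≤ |(Matrix.of (Fin.cons (formVec θ Y) (triple θ X i))).det| := by
  have hcons : (Fin.cons (formVec θ Y) (triple θ X i) : Fin 4 → Fin 4 → ℝ) =
      fun k => formVec θ (![Y, X (i + 2), X i, X (i + 1)] k) := by
    funext k
    fin_cases k <;> rfl
  have hli := linearIndependent_finCons.2 ⟨hi, hY⟩
  rw [hcons] at hli ⊢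
  exact one_le_abs_det_formVec hli

namespace IsMinimalSeq

theorem abs_det_cons_triple_le (hX : IsMinimalSeq θ X) (i : ℕ) {Z : Fin 4 → ℝ} {r : ℝ}
    (hZ : ∀ j, |Z j| ≤
      r * (Fin.cons (|linForm θ (X i)| / height (X i)) 1 : Fin 4 → ℝ) j) :
    |(Matrix.of (Fin.cons Z (triple θ X i))).det| ≤
      24 * (r * (|linForm θ (X i)| * height (X (i + 1)) * height (X (i + 2)))) := by
  have hentry : ∀ k j, |Matrix.of (Fin.cons Z (triple θ X i)) k j| ≤
      ![r, height (X (i + 2)), height (X i), height (X (i + 1))] k *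
        (Fin.cons (|linForm θ (X i)| / height (X i)) 1 : Fin 4 → ℝ) j := by
    intro k j
    fin_cases k
    · exact hZ j
    all_goals exact hX.abs_formVec_le (by omega) j
  refine (abs_det_le_factorial_mul_prod hentry).trans_eq ?_
  have hne := (hX.height_cast_pos i).ne'
  rw [Fintype.card_fin, Fin.prod_univ_four, Fin.prod_univ_four]
  change ((24 : ℕ) : ℝ) * (r * height (X (i + 2)) * height (X i) * height (X (i + 1)) *
    (|linForm θ (X i)| / height (X i) * 1 * 1 * 1)) = _
  push_cast
  field_simp

theorem one_le_of_formVec_notMem_span (hX : IsMinimalSeq θ X) {k : ℕ} (hpk : p ≤ k)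
    (hp : LinearIndependent ℝ (triple θ X p))
    (hk : formVec θ (X k) ∉ Submodule.span ℝ (Set.range (triple θ X p))) :
    1 ≤ 24 * (height (X k) *
      (|linForm θ (X p)| * height (X (p + 1)) * height (X (p + 2)))) :=
  (one_le_abs_det_cons_triple hp hk).trans
    (hX.abs_det_cons_triple_le p (hX.abs_formVec_le hpk))

theorem exists_one_le_mul_of_forall_mem (hX : IsMinimalSeq θ X) {S : Submodule ℝ (Fin 4 → ℝ)}
    (hS : S ≠ ⊤) (hmem : ∀ i ≥ p, formVec θ (X i) ∈ S) :
    ∃ R : ℝ, ∀ q ≥ p, LinearIndependent ℝ (triple θ X q) →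
      1 ≤ R * (|linForm θ (X q)| * height (X (q + 1)) * height (X (q + 2))) := by
  obtain ⟨Y, hY⟩ := exists_formVec_notMem θ hS
  -- `Z` has first coordinate `0` and the same determinant as `Y` with each triple in `S`.
  let t := linForm θ Y / linForm θ (X p)
  let Z := formVec θ Y - t • formVec θ (X p)
  have hZ0 : Z 0 = 0 := by
    simp [Z, t, div_mul_cancel₀ _ (abs_pos.1 (hX.abs_form_pos p))]
  refine ⟨24 * ‖Z‖, fun q hpq hq => ?_⟩
  have hle : Submodule.span ℝ (Set.range (triple θ X q)) ≤ S := by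
    rw [Submodule.span_le]
    rintro _ ⟨k, rfl⟩
    fin_cases k <;> exact hmem _ (by omega)
  have hdet0 : (Matrix.of (Fin.cons (formVec θ (X p)) (triple θ X q))).det = 0 := by
    by_contra hne
    exact hS (eq_top_of_det_ne_zero hne
      (Fin.cases (hmem p le_rfl) fun k => hle (Submodule.subset_span ⟨k, rfl⟩)))
  have hdet : (Matrix.of (Fin.cons Z (triple θ X q))).det =
      (Matrix.of (Fin.cons (formVec θ Y) (triple θ X q))).det := by
    rw [det_of_cons_sub_smul, hdet0, mul_zero, sub_zero]
  rw [mul_assoc]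
  calc 1 ≤ |(Matrix.of (Fin.cons Z (triple θ X q))).det| :=
        hdet ▸ one_le_abs_det_cons_triple hq fun h => hY (hle h)
    _ ≤ _ := by
        refine hX.abs_det_cons_triple_le q (Fin.cases ?_ fun j => ?_)
        · rw [hZ0, abs_zero, Fin.cons_zero]
          positivity
        · simpa using norm_le_pi_norm Z j.succ

theorem mul_log_height_le (hX : IsMinimalSeq θ X) {α g : ℝ} {q : ℕ} (hg : 0 ≤ g) (hgα : g + 1 < α)
    (hform : ∀ i ≥ p, α * Real.log (height (X (i + 1))) ≤ -Real.log |linForm θ (X i)|)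
    (hbest : ∀ i ≥ p, -Real.log |linForm θ (X i)| ≤ g * α * Real.log (height (X i)))
    (hstep : ∀ i ≥ p, Real.log (height (X (i + 1))) ≤ g * Real.log (height (X i)))
    (hpq : p < q) (hp : LinearIndependent ℝ (triple θ X p))
    (hq : formVec θ (X (q + 2)) ∉ Submodule.span ℝ (Set.range (triple θ X p)))
    (hdep : ∀ i, p < i → i < q → ¬LinearIndependent ℝ (triple θ X i)) :
    (α - 1 - g - g ^ 2) * Real.log (height (X (p + 1))) ≤ 2 * Real.log 24 := by
  have hdet : 0 ≤ Real.log 24 + (Real.log (height (X (q + 2))) + (Real.log |linForm θ (X p)| +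
      Real.log (height (X (p + 1))) + Real.log (height (X (p + 2))))) := by
    have hpos := mul_pos (hX.abs_form_pos p) (hX.height_cast_pos (p + 1))
    have hpos' := mul_pos hpos (hX.height_cast_pos (p + 2))
    have hlog := Real.log_nonneg (hX.one_le_of_formVec_notMem_span (by omega) hp hq)
    rwa [Real.log_mul (by norm_num) (mul_pos (hX.height_cast_pos _) hpos').ne',
      Real.log_mul (hX.height_cast_pos _).ne' hpos'.ne',
      Real.log_mul hpos.ne' (hX.height_cast_pos _).ne', hX.log_form_mul_height] at hlog
  have hminor : Real.log |linForm θ (X (p + 1))| + Real.log (height (X (p + 2))) ≤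
      Real.log 4 + (Real.log |linForm θ (X q)| + Real.log (height (X (q + 1)))) := by
    have hlog := Real.log_le_log (mul_pos (hX.abs_form_pos _) (hX.height_cast_pos _))
      (hX.form_mul_height_le (Nat.succ_le_of_lt hpq) hdep)
    rwa [Real.log_mul (by norm_num)
      (mul_pos (hX.abs_form_pos _) (hX.height_cast_pos _)).ne', hX.log_form_mul_height,
      hX.log_form_mul_height] at hlog
  have h24 : Real.log 4 ≤ Real.log 24 := Real.log_le_log (by norm_num) (by norm_num)
  refine mul_le_two_mul_of_det_of_minor hg hgα (hstep (p + 1) (by omega)) (hstep (q + 1) (by omega))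
    (Real.log_nonneg (by norm_num)) ?_ ?_
  · linarith [hform p le_rfl]
  · linarith [hform q hpq.le, hbest (p + 1) (by omega)]

theorem le_sq_add_add_one (hX : IsMinimalSeq θ X) {α g : ℝ} (hg : 0 ≤ g) (hα : 1 < α)
    (hform : ∀ᶠ i in atTop, α * Real.log (height (X (i + 1))) ≤ -Real.log |linForm θ (X i)|)
    (hbest : ∀ᶠ i in atTop, -Real.log |linForm θ (X i)| ≤ g * α * Real.log (height (X i))) :
    α ≤ g ^ 2 + g + 1 := by
  by_contra! hlt
  have hgα : g + 1 < α := by linarith [sq_nonneg g]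
  have hstep : ∀ᶠ i in atTop, Real.log (height (X (i + 1))) ≤ g * Real.log (height (X i)) := by
    filter_upwards [hform, hbest] with i hi hi'
    exact le_of_mul_le_mul_left (by linarith) (one_pos.trans hα)
  have hlim := hX.tendsto_form_mul_height_mul_height hgα hform hstep
  have hfreq := hX.frequently_linearIndependent_triple (squeeze_zero (fun i => by positivity)
    (fun i => le_mul_of_one_le_right (by positivity)
      (by exact_mod_cast hX.height_pos (i + 2))) hlim)
  have hlarge : ∀ᶠ i in atTop, 2 * Real.log 24 <
      (α - 1 - g - g ^ 2) * Real.log (height (X (i + 1))) :=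
    (((tendsto_add_atTop_iff_nat 1).2 hX.tendsto_log_height).const_mul_atTop
      (by linarith)).eventually_gt_atTop _
  obtain ⟨N, hN⟩ := eventually_atTop.1 (hform.and (hbest.and (hstep.and hlarge)))
  obtain ⟨p, hNp, hp⟩ := frequently_atTop.1 hfreq N
  by_cases hmem : ∀ i ≥ p, formVec θ (X i) ∈ Submodule.span ℝ (Set.range (triple θ X p))
  · have hS : Submodule.span ℝ (Set.range (triple θ X p)) ≠ ⊤ := fun h => by
      have hle := finrank_range_le_card (R := ℝ) (triple θ X p)
      rw [Set.finrank, h, finrank_top] at hle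
      simp at hle
    obtain ⟨R, hR⟩ := hX.exists_one_le_mul_of_forall_mem hS hmem
    have hlim0 := hlim.const_mul R
    rw [mul_zero] at hlim0
    obtain ⟨q, hq, hpq, hlt⟩ := (hfreq.and_eventually
      ((eventually_ge_atTop p).and (hlim0.eventually_lt_const one_pos))).exists
    exact hlt.not_ge (hR q hpq hq)
  · push Not at hmem
    obtain ⟨p', hpp', q, hpq, hp', hq, hdep⟩ := exists_formVec_notMem_span_triple hp hmem
    have hNi (i : ℕ) (hi : i ≥ p') := hN i (hNp.trans (hpp'.trans hi))
    exact ((hNi p' le_rfl).2.2.2).not_ge (hX.mul_log_height_le hg hgα (fun i hi => (hNi i hi).1)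
      (fun i hi => (hNi i hi).2.1) (fun i hi => (hNi i hi).2.2.1) hpq hp' hq hdep)

end IsMinimalSeq

end ThreeVariables

section IrrationalityMeasure

variable {θ : Fin 3 → ℝ} {t : ℝ}

theorem natCast_height_eq_max (X : Fin 4 → ℤ) :
    (height X : ℤ) = max |X 1| (max |X 2| |X 3|) := by
  have hsup : height X = max (X 1).natAbs (max (X 2).natAbs (X 3).natAbs) := by
    simp [height, Fin.univ_succ]
  simp only [hsup, Nat.cast_max, Int.natCast_natAbs]

theorem psiL3_le_abs_linForm {X : Fin 4 → ℤ} (hX : 0 < height X) (ht : height X ≤ t) :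
    psiL3 θ t ≤ |linForm θ X| := by
  rw [← Nat.cast_pos (α := ℤ), natCast_height_eq_max] at hX
  rw [← Int.cast_natCast, natCast_height_eq_max] at ht
  refine le_trans (csInf_le ⟨0, ?_⟩ ⟨X 1, X 2, X 3, hX, ht, rfl⟩) ?_
  · rintro v ⟨x₁, x₂, x₃, -, -, rfl⟩
    exact abs_nonneg _
  · refine (round_le _ (-X 0)).trans_eq ?_
    rw [linForm_apply, Fin.sum_univ_three]
    change |_ - ((-X 0 : ℤ) : ℝ)| = |X 0 + (θ 0 * X 1 + θ 1 * X 2 + θ 2 * X 3)|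
    rw [Int.cast_neg, sub_neg_eq_add, add_comm]

theorem le_psiL3 (ht : 1 ≤ t) {r : ℝ}
    (h : ∀ Y : Fin 4 → ℤ, 0 < height Y → height Y ≤ t → r ≤ |linForm θ Y|) : r ≤ psiL3 θ t := by
  refine le_csInf ⟨_, 1, 0, 0, by simp, by simpa using ht, rfl⟩ ?_
  rintro v ⟨x₁, x₂, x₃, hpos, hle, rfl⟩
  let Y : Fin 4 → ℤ := ![-round (θ 0 * x₁ + θ 1 * x₂ + θ 2 * x₃), x₁, x₂, x₃]
  have hY : (height Y : ℤ) = max |x₁| (max |x₂| |x₃|) := natCast_height_eq_max Y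
  refine (h Y ?_ ?_).trans_eq ?_
  · exact_mod_cast hY ▸ hpos
  · rw [← Int.cast_natCast, hY]
    exact hle
  · rw [linForm_apply, Fin.sum_univ_three]
    change |((-round (θ 0 * x₁ + θ 1 * x₂ + θ 2 * x₃) : ℤ) +
      (θ 0 * x₁ + θ 1 * x₂ + θ 2 * x₃) : ℝ)| = _
    rw [Int.cast_neg, neg_add_eq_sub, nint]

theorem eventually_rpow_three_mul_psiL3_le (θ : Fin 3 → ℝ) :
    ∀ᶠ t : ℝ in atTop, t ^ (3 : ℝ) * psiL3 θ t ≤ 8 := by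
  filter_upwards [eventually_ge_atTop 1] with t ht
  have hN : 0 < ⌊t⌋₊ := Nat.floor_pos.2 ht
  have htN : t ≤ 2 * ⌊t⌋₊ := by
    linarith [Nat.lt_floor_add_one t, Nat.one_le_cast (α := ℝ).2 hN]
  obtain ⟨X, hX, hXN, hlt⟩ := exists_abs_linForm_lt_one_div_pow θ hN
  have hψ : psiL3 θ t ≤ 1 / (⌊t⌋₊ : ℝ) ^ 3 :=
    (psiL3_le_abs_linForm hX ((Nat.cast_le.2 hXN).trans (Nat.floor_le (by linarith)))).trans hlt.le
  have hψ0 : 0 ≤ psiL3 θ t := le_psiL3 ht fun _ _ _ => abs_nonneg _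
  calc t ^ (3 : ℝ) * psiL3 θ t = t ^ 3 * psiL3 θ t := by norm_cast
    _ ≤ (2 * ⌊t⌋₊) ^ 3 * (1 / (⌊t⌋₊ : ℝ) ^ 3) := by gcongr
    _ = 8 := by
      field_simp
      norm_num

namespace IsMinimalSeq

variable {X : ℕ → Fin 4 → ℤ} {i : ℕ}

theorem abs_form_le_psiL3 (hX : IsMinimalSeq θ X) (ht : 1 ≤ t) (hti : t < height (X (i + 1))) :
    |linForm θ (X i)| ≤ psiL3 θ t :=
  le_psiL3 ht fun Y hY hYt =>
    hX.le_form i Y (ne_zero_of_height_pos hY) (Nat.cast_lt.1 (hYt.trans_lt hti))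

theorem eventually_le_neg_log_form (hX : IsMinimalSeq θ X) {α γ C : ℝ} (hαγ : α < γ)
    (hψ : ∀ᶠ t : ℝ in atTop, t ^ γ * psiL3 θ t ≤ C) :
    ∀ᶠ i in atTop, α * Real.log (height (X (i + 1))) ≤ -Real.log |linForm θ (X i)| := by
  have hheight := (tendsto_add_atTop_iff_nat 1).2 hX.tendsto_height_cast
  have hlog := (tendsto_add_atTop_iff_nat 1).2 hX.tendsto_log_height
  filter_upwards [(hheight.atTop_div_const two_pos).eventually hψ, hheight.eventually_ge_atTop 2,
    hlog.eventually_ge_atTop ((γ * Real.log 2 + Real.log (max C 1)) / (γ - α))]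
    with i hi htwo hlarge
  have hhalf : (0 : ℝ) < height (X (i + 1)) / 2 := by linarith
  have hpow := Real.rpow_pos_of_pos hhalf γ
  have hL := hX.abs_form_pos i
  have hbound : (height (X (i + 1)) / 2 : ℝ) ^ γ * |linForm θ (X i)| ≤ max C 1 :=
    ((mul_le_mul_of_nonneg_left (hX.abs_form_le_psiL3 (by linarith) (by linarith)) hpow.le).trans
      hi).trans (le_max_left C 1)
  have hlogbound := Real.log_le_log (mul_pos hpow hL) hbound
  rw [Real.log_mul hpow.ne' hL.ne', Real.log_rpow hhalf,
    Real.log_div (by linarith) two_ne_zero] at hlogbound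
  rw [div_le_iff₀ (by linarith)] at hlarge
  linarith

theorem eventually_neg_log_form_le (hX : IsMinimalSeq θ X) {β : ℝ}
    (hψ : ∀ᶠ t : ℝ in atTop, 1 < t ^ β * psiL3 θ t) :
    ∀ᶠ i in atTop, -Real.log |linForm θ (X i)| ≤ β * Real.log (height (X i)) := by
  filter_upwards [hX.tendsto_height_cast.eventually hψ] with i hi
  have hM := hX.height_cast_pos i
  have hpow := Real.rpow_pos_of_pos hM β
  have hbound := hi.le.trans
    (mul_le_mul_of_nonneg_left (psiL3_le_abs_linForm (hX.height_pos i) le_rfl) hpow.le)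
  have hlog := Real.log_nonneg hbound
  rw [Real.log_mul hpow.ne' (hX.abs_form_pos i).ne', Real.log_rpow hM] at hlog
  linarith

end IsMinimalSeq

theorem linForm_ne_zero_of_eventually_lt_rpow_mul_psiL3 {β : ℝ}
    (hψ : ∀ᶠ t : ℝ in atTop, 1 < t ^ β * psiL3 θ t) {Y : Fin 4 → ℤ} (hY : 0 < height Y) :
    linForm θ Y ≠ 0 := by
  intro h0
  obtain ⟨t, ht, ht0, htY⟩ := (hψ.and ((eventually_ge_atTop 0).and
    (eventually_ge_atTop (height Y : ℝ)))).exists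
  have hle := psiL3_le_abs_linForm (θ := θ) hY htY
  rw [h0, abs_zero] at hle
  linarith [mul_nonpos_of_nonneg_of_nonpos (Real.rpow_nonneg ht0 β) hle]

theorem frequently_rpow_mul_psiL3_le {α γ C g : ℝ} (hg : 0 ≤ g) (hgα : g ^ 2 + g + 1 < α)
    (hαγ : α < γ) (hψ : ∀ᶠ t : ℝ in atTop, t ^ γ * psiL3 θ t ≤ C) :
    ∃ᶠ t : ℝ in atTop, t ^ (g * α) * psiL3 θ t ≤ 1 := by
  by_contra hfreq
  simp only [not_frequently, not_le] at hfreq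
  obtain ⟨X, hX⟩ := exists_isMinimalSeq fun Y =>
    linForm_ne_zero_of_eventually_lt_rpow_mul_psiL3 hfreq (Y := Y)
  exact hgα.not_ge (hX.le_sq_add_add_one hg (by linarith [sq_nonneg g])
    (hX.eventually_le_neg_log_form hαγ hψ) (hX.eventually_neg_log_form_le hfreq))

theorem three_le_of_isLUB {omegaHat : ℝ} (homegaHat : IsLUB {γ : ℝ | 0 ≤ γ ∧ ∃ C : ℝ,
    ∀ᶠ t : ℝ in atTop, t ^ γ * psiL3 θ t ≤ C} omegaHat) : 3 ≤ omegaHat :=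
  homegaHat.1 ⟨by norm_num, 8, eventually_rpow_three_mul_psiL3_le θ⟩

theorem mul_sqrt_add_one_div_sub_le {w : ℝ} (hw : 3 ≤ w) :
    w * (Real.sqrt (w + 1 / w ^ 2 - 7 / 4) + 1 / w - 1 / 2) ≤
      w * (Real.sqrt (w - 3 / 4) - 1 / 2) := by
  have hpos : 0 < w := by linarith
  have hone : 1 / w ≤ 1 := (div_le_one hpos).2 (by linarith)
  have hroot : Real.sqrt (w - 3 / 4) ≤ w / 2 :=
    Real.sqrt_le_iff.2 ⟨by positivity, by nlinarith⟩
  have hroot_ge : 1 ≤ Real.sqrt (w - 3 / 4) := Real.one_le_sqrt.2 (by linarith)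
  suffices Real.sqrt (w + 1 / w ^ 2 - 7 / 4) ≤ Real.sqrt (w - 3 / 4) - 1 / w by
    gcongr
    linarith
  refine Real.sqrt_le_iff.2 ⟨by linarith, ?_⟩
  have hcross : 2 * Real.sqrt (w - 3 / 4) * (1 / w) ≤ 1 := by
    rw [mul_one_div, div_le_one hpos]
    linarith
  rw [sub_sq, Real.sq_sqrt (by linarith), div_pow, one_pow]
  linarith

theorem stmt18_general (θ : Fin 3 → ℝ) (omegaHat : ℝ)
    (homegaHat : IsLUB {γ : ℝ | 0 ≤ γ ∧ ∃ C : ℝ,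
      ∀ᶠ t : ℝ in atTop, t ^ γ * psiL3 θ t ≤ C} omegaHat) :
    ∀ x : ℝ, x < omegaHat * (Real.sqrt (omegaHat - 3 / 4) - 1 / 2) →
      ∃ γ : ℝ, (0 ≤ γ ∧ ∃ C : ℝ, ∃ᶠ t : ℝ in atTop, t ^ γ * psiL3 θ t ≤ C) ∧ x < γ := by
  intro x hx
  have hthree := three_le_of_isLUB homegaHat
  have hroot : 1 < Real.sqrt (omegaHat - 3 / 4) := Real.lt_sqrt_of_sq_lt (by linarith)
  have hpos : 0 < omegaHat * (Real.sqrt (omegaHat - 3 / 4) - 1 / 2) :=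
    mul_pos (by linarith) (by linarith)
  have hnear : ∀ᶠ a in nhds omegaHat, 0 < a ∧ max x 0 < a * (Real.sqrt (a - 3 / 4) - 1 / 2) :=
    (lt_mem_nhds (by linarith)).and
      (ContinuousAt.eventually_lt (by fun_prop) (by fun_prop) (max_lt hx hpos))
  obtain ⟨α, ⟨hα, hxα⟩, hαω⟩ :=
    ((hnear.filter_mono nhdsWithin_le_nhds).and
      (self_mem_nhdsWithin (s := Set.Iio omegaHat))).exists
  obtain ⟨γ, ⟨-, C, hC⟩, hαγ⟩ := (lt_isLUB_iff homegaHat).1 hαω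
  obtain ⟨g, hxg, hgα⟩ := exists_between ((div_lt_iff₀' hα).2 hxα)
  rw [div_lt_iff₀ hα, max_lt_iff] at hxg
  have hg : 0 ≤ g := (pos_of_mul_pos_left hxg.2 hα.le).le
  have hsq : (g + 1 / 2) ^ 2 < α - 3 / 4 := (Real.lt_sqrt (by linarith)).1 (by linarith)
  exact ⟨g * α, ⟨hxg.2.le, 1, frequently_rpow_mul_psiL3_le hg (by linarith) hαγ hC⟩, hxg.1⟩

end IrrationalityMeasure

/-- Moshchevitin's improvement of Jarník's inequality for `m = 3`, `n = 1`:
`ω ≥ ω̂·(√(ω̂ + 1/ω̂² − 7/4) + 1/ω̂ − 1/2)`.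
The conclusion `ω ≥ RHS`, where `ω = sup{γ ≥ 0 : liminf t^γ ψ(t) < ∞}` (possibly `+∞`),
is expressed as: every real `x < RHS` is exceeded by some element of that set. -/
theorem stmt18 (θ : Fin 3 → ℝ)
    (hindep : LinearIndependent ℚ ![(1 : ℝ), θ 0, θ 1, θ 2])
    (omegaHat : ℝ)
    (homegaHat : IsLUB {γ : ℝ | 0 ≤ γ ∧ ∃ C : ℝ,
      ∀ᶠ t : ℝ in atTop, t ^ γ * psiL3 θ t ≤ C} omegaHat) :
    ∀ x : ℝ,
      x < omegaHat * (Real.sqrt (omegaHat + 1 / omegaHat ^ 2 - 7 / 4)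
        + 1 / omegaHat - 1 / 2) →
      ∃ γ : ℝ, (0 ≤ γ ∧ ∃ C : ℝ, ∃ᶠ t : ℝ in atTop, t ^ γ * psiL3 θ t ≤ C) ∧ x < γ := fun x hx =>
  stmt18_general θ omegaHat homegaHat x
    (hx.trans_le (mul_sqrt_add_one_div_sub_le (three_le_of_isLUB homegaHat)))
end

section
/- Let θ_1^1, θ_1^2, θ_2^1, θ_2^2 be four real numbers linearly independent over ℚ together with 1, and suppose the 2×2 matrix Θ with rows (θ_1^1, θ_1^2) and (θ_2^1, θ_2^2) satisfies Θx ∉ ℤ² for every nonzero x ∈ ℤ². Define ψ(t) = min over integer vectors (x_1, x_2) with 0 < max(|x_1|, |x_2|) ≤ t of max( ‖θ_1^1 x_1 + θ_1^2 x_2‖, ‖θ_2^1 x_1 + θ_2^2 x_2‖ ), and set ω = sup{ γ ≥ 0 : liminf_{t→∞} t^γ ψ(t) < ∞ } and ω̂ = sup{ γ ≥ 0 : limsup_{t→∞} t^γ ψ(t) < ∞ }. Then ω ≥ ( 1 − ω̂ + √( (1 − ω̂)² + 4ω̂(2ω̂² − 2ω̂ + 1) ) ) / 2. -/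
open Filter

/-- The irrationality measure function for a pair of linear forms in two variables
(the case `m = n = 2`):
`psiM Θ t = min_{x ∈ ℤ², 0 < max|x_j| ≤ t} max_i ‖θ_i¹x₁ + θ_i²x₂‖`. -/
noncomputable def psiM (θ11 θ12 θ21 θ22 : ℝ) (t : ℝ) : ℝ :=
  sInf {v : ℝ | ∃ x₁ x₂ : ℤ, 0 < max |x₁| |x₂| ∧ ((max |x₁| |x₂| : ℤ) : ℝ) ≤ t ∧
    v = max (nint (θ11 * x₁ + θ12 * x₂)) (nint (θ21 * x₁ + θ22 * x₂))}

/-!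
An integer point `(x, y)` has height `|x|` and error `|Θx - y|`. Let `z₀, z₁, …` be the minimal
points, with heights `Xⱼ` and errors `Lⱼ`. A uniform exponent `η` gives `Lⱼ ≪ Xⱼ₊₁ ^ (-η)`, and if
`ω` is not an ordinary exponent then `Lⱼ ≫ Xⱼ ^ (-ω)`. For `η > 1` we get `Xⱼ₊₁ Lⱼ → 0`; as `Θᵀ`
maps no nonzero integer vector to an integer vector, no tail of the sequence lies in a
hyperplane. Hence arbitrarily far out there are `j < l` such that `zⱼ₊₁, …, zₗ₊₁` lie in one
plane while `zⱼ, zₗ, zₗ₊₁, zₗ₊₂` are independent. Their determinant is a nonzero integer, so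
`1 ≪ Xₗ₊₁ Xₗ₊₂ Lⱼ Lₗ`, and comparing two bases of the planar lattice gives `Xⱼ₊₂ Lⱼ₊₁ ≪ Xₗ₊₁ Lₗ`. In
`log Xⱼ₊₁`, `log Xₗ₊₁`, `log Xₗ₊₂` these are linear inequalities, which bound `log Xⱼ₊₁` as soon as
`ω² + (η - 1) ω < η (2η² - 2η + 1)`. This contradicts `Xⱼ → ∞`.
-/

namespace LinearForms

section Norm

variable {ι κ E : Type*} [Fintype ι] [Fintype κ] [NormedAddCommGroup E] [NormedSpace ℝ E]

lemma exists_abs_apply_eq_norm {v : ι → ℝ} (hv : 0 < ‖v‖) : ∃ i, |v i| = ‖v‖ := by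
  by_contra! h
  exact lt_irrefl ‖v‖ ((pi_norm_lt_iff hv).2 fun i => (norm_le_pi_norm v i).lt_of_ne (h i))

lemma norm_sub_lt_of_norm_smul_sub_lt {p q : E} {a r : ℝ} (ha : 3 / 4 < a) (ha' : a ≤ 1)
    (hp : ‖p‖ ≤ r) (h : ‖a • p - q‖ < r / 4) : ‖p - q‖ < r := by
  have hr : 0 ≤ r := (norm_nonneg p).trans hp
  calc ‖p - q‖ = ‖(1 - a) • p + (a • p - q)‖ := by congr 1; module
    _ ≤ (1 - a) * ‖p‖ + ‖a • p - q‖ := by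
      refine (norm_add_le _ _).trans_eq ?_
      rw [norm_smul, Real.norm_of_nonneg (by linarith)]
    _ < r := by nlinarith

lemma exists_smul_close_of_minors_small {p q : ι → ℝ} {e f : κ → ℝ} (hq : 0 < ‖q‖) (he : 0 < ‖e‖)
    (hp : ‖p‖ ≤ ‖q‖) (hf : ‖f‖ ≤ ‖e‖)
    (hM : ∀ i k, |p i * f k - q i * e k| < ‖q‖ * ‖e‖ / 4) :
    ∃ a b : ℝ, |a| ≤ 1 ∧ |b| ≤ 1 ∧ |b * a - 1| < 1 / 4 ∧
      ‖a • p - q‖ < ‖q‖ / 4 ∧ ‖b • f - e‖ < ‖e‖ / 4 := by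
  obtain ⟨i₀, hi₀⟩ := exists_abs_apply_eq_norm hq
  obtain ⟨k₀, hk₀⟩ := exists_abs_apply_eq_norm he
  have hq₀ : q i₀ ≠ 0 := abs_pos.1 (hi₀ ▸ hq)
  have he₀ : e k₀ ≠ 0 := abs_pos.1 (hk₀ ▸ he)
  have hpa : ∀ i, |f k₀ / e k₀ * p i - q i| < ‖q‖ / 4 := fun i => by
    refine lt_of_mul_lt_mul_right ?_ he.le
    calc |f k₀ / e k₀ * p i - q i| * ‖e‖ = |p i * f k₀ - q i * e k₀| := by
          rw [← hk₀, ← abs_mul]; congr 1; field_simp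
      _ < ‖q‖ / 4 * ‖e‖ := (hM i k₀).trans_eq (by ring)
  have hfb : ∀ k, |p i₀ / q i₀ * f k - e k| < ‖e‖ / 4 := fun k => by
    refine lt_of_mul_lt_mul_right ?_ hq.le
    calc |p i₀ / q i₀ * f k - e k| * ‖q‖ = |p i₀ * f k - q i₀ * e k| := by
          rw [← hi₀, ← abs_mul]; congr 1; field_simp
      _ < ‖e‖ / 4 * ‖q‖ := (hM i₀ k).trans_eq (by ring)
  refine ⟨f k₀ / e k₀, p i₀ / q i₀, ?_, ?_, ?_, (pi_norm_lt_iff (by positivity)).2 hpa,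
    (pi_norm_lt_iff (by positivity)).2 hfb⟩
  · rw [abs_div, hk₀, div_le_one he]
    exact (norm_le_pi_norm f k₀).trans hf
  · rw [abs_div, hi₀, div_le_one hq]
    exact (norm_le_pi_norm p i₀).trans hp
  · refine lt_of_mul_lt_mul_right ?_ hq.le
    calc |p i₀ / q i₀ * (f k₀ / e k₀) - 1| * ‖q‖ = |f k₀ / e k₀ * p i₀ - q i₀| := by
          rw [← hi₀, ← abs_mul]; congr 1; field_simp
      _ < 1 / 4 * ‖q‖ := (hpa i₀).trans_eq (by ring)

lemma close_up_to_sign_of_minors_small {p q : ι → ℝ} {e f : κ → ℝ} (hq : 0 < ‖q‖) (he : 0 < ‖e‖)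
    (hp : ‖p‖ ≤ ‖q‖) (hf : ‖f‖ ≤ ‖e‖)
    (hM : ∀ i k, |p i * f k - q i * e k| < ‖q‖ * ‖e‖ / 4) :
    (‖p - q‖ < ‖q‖ ∧ ‖f - e‖ < ‖e‖) ∨ (‖p + q‖ < ‖q‖ ∧ ‖f + e‖ < ‖e‖) := by
  obtain ⟨a, b, ha, hb, hab, hpq, hfe⟩ := exists_smul_close_of_minors_small hq he hp hf hM
  rw [abs_le] at ha hb
  rw [abs_lt] at hab
  rcases le_total 0 a with h0 | h0
  · have ha' : 3 / 4 < a := by nlinarith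
    have hb' : 3 / 4 < b := by nlinarith
    exact .inl ⟨norm_sub_lt_of_norm_smul_sub_lt ha' ha.2 hp hpq,
      norm_sub_lt_of_norm_smul_sub_lt hb' hb.2 hf hfe⟩
  · have ha' : 3 / 4 < -a := by nlinarith
    have hb' : 3 / 4 < -b := by nlinarith
    rw [← norm_neg (p + q), ← norm_neg (f + e), neg_add', neg_add']
    refine .inr ⟨norm_sub_lt_of_norm_smul_sub_lt ha' (by linarith) (by rwa [norm_neg]) ?_,
      norm_sub_lt_of_norm_smul_sub_lt hb' (by linarith) (by rwa [norm_neg]) ?_⟩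
    · rwa [neg_smul_neg]
    · rwa [neg_smul_neg]

end Norm

/-! ### Sequences of vectors and the planes they span -/

section PlaneStretch

open Module Set Submodule

variable {K V : Type*} [DivisionRing K] [AddCommGroup V] [Module K V] {s : ℕ → V}

lemma span_pair_eq_span_pair [FiniteDimensional K V] {a b u v : V}
    (hab : LinearIndependent K ![a, b]) (huv : LinearIndependent K ![u, v])
    (hu : u ∈ span K {a, b}) (hv : v ∈ span K {a, b}) :
    span K {u, v} = span K {a, b} := by
  have finrank_eq {x y : V} (h : LinearIndependent K ![x, y]) : finrank K (span K {x, y}) = 2 := by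
    have := finrank_span_eq_card h
    rwa [Matrix.range_cons_cons_empty, Fintype.card_fin] at this
  exact eq_of_le_of_finrank_eq (span_le.2 (pair_subset hu hv))
    ((finrank_eq huv).trans (finrank_eq hab).symm)

lemma span_ne_top_of_card_lt_finrank {t : Finset V} (ht : t.card < finrank K V) :
    span K (t : Set V) ≠ ⊤ := fun h => by
  have := finrank_span_finset_le_card (R := K) t
  rw [Set.finrank, h, finrank_top] at this
  omega

lemma exists_span_image_Iic_eq_top [FiniteDimensional K V] (hs : span K (range s) = ⊤) :
    ∃ n, span K (s '' Iic n) = ⊤ := by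
  let W : ℕ →o Submodule K V := ⟨fun n => span K (s '' Iic n), fun _ _ h =>
    span_mono (image_mono (Iic_subset_Iic.2 h))⟩
  obtain ⟨n, hn⟩ := monotone_stabilizes_iff_noetherian.2 inferInstance W
  refine ⟨n, top_le_iff.1 (hs ▸ span_le.2 (range_subset_iff.2 fun i => ?_))⟩
  change s i ∈ W n
  rw [hn (max n i) (le_max_left _ _)]
  exact subset_span (mem_image_of_mem s (mem_Iic.2 (le_max_right _ _)))

lemma exists_span_image_Iic_eq_top_and_notMem (hV : 3 < finrank K V)
    (hs : span K (range s) = ⊤) :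
    ∃ l, span K (s '' Iic (l + 2)) = ⊤ ∧ s (l + 2) ∉ span K (s '' Iic (l + 1)) := by
  classical
  have : FiniteDimensional K V := .of_finrank_pos (by omega)
  have hex := exists_span_image_Iic_eq_top hs
  have hn := Nat.find_spec hex
  have hmin := fun k => Nat.find_min (m := k) hex
  generalize Nat.find hex = n at hn hmin
  have hcard : ¬n ≤ 2 := fun h => by
    rw [← Finset.coe_Iic, ← Finset.coe_image] at hn
    refine span_ne_top_of_card_lt_finrank (Finset.card_image_le.trans_lt ?_) hn
    rw [Nat.card_Iic]
    omega
  obtain ⟨l, rfl⟩ : ∃ l, n = l + 2 := ⟨n - 2, by omega⟩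
  refine ⟨l, hn, fun hmem => hmin (l + 1) (by omega) (top_le_iff.1 (hn ▸ span_le.2 ?_))⟩
  rw [show Iic (l + 2) = insert (l + 2) (Iic (l + 1)) by
    ext i
    simp only [mem_Iic, mem_insert_iff]
    omega, image_insert_eq]
  exact insert_subset hmem subset_span

lemma exists_last_notMem {P : Submodule K V} {j l : ℕ} (hjl : j ≤ l) (hj : s j ∉ P)
    (hl : s l ∈ P) : ∃ j < l, s j ∉ P ∧ ∀ i, j < i → i ≤ l → s i ∈ P := by
  classical
  have hspec := Nat.findGreatest_spec (P := fun i => s i ∉ P) hjl hj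
  refine ⟨_, (Nat.findGreatest_le l).lt_of_ne fun h => (h ▸ hspec) hl, hspec, fun i hi hil => ?_⟩
  exact not_not.1 (Nat.findGreatest_is_greatest hi hil)

lemma linearIndependent_cons_snoc {x u v y : V} (huv : LinearIndependent K ![u, v])
    (hx : x ∉ span K {u, v}) (hy : y ∉ span K {x, u, v}) :
    LinearIndependent K ![x, u, v, y] := by
  have hxuv : LinearIndependent K ![x, u, v] :=
    linearIndependent_finCons.2 ⟨huv, by rwa [Matrix.range_cons_cons_empty]⟩
  have hrange : range ![x, u, v] = {x, u, v} := by
    rw [Matrix.range_cons, Matrix.range_cons_cons_empty, singleton_union]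
  have hsnoc : ![x, u, v, y] = Fin.snoc ![x, u, v] y := by
    ext i; fin_cases i <;> rfl
  rw [hsnoc]
  exact linearIndependent_finSnoc.2 ⟨hxuv, hrange ▸ hy⟩

lemma exists_plane_stretch_of_span_range (hV : 3 < finrank K V)
    (hpair : ∀ j, LinearIndependent K ![s j, s (j + 1)]) (hs : span K (range s) = ⊤) :
    ∃ j l, j < l ∧ span K {s (j + 1), s (j + 2)} = span K {s l, s (l + 1)} ∧
      LinearIndependent K ![s j, s l, s (l + 1), s (l + 2)] := by
  classical
  have : FiniteDimensional K V := .of_finrank_pos (by omega)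
  obtain ⟨l, htop, hlast⟩ := exists_span_image_Iic_eq_top_and_notMem hV hs
  set P := span K {s l, s (l + 1)}
  have hsl : s l ∈ P := subset_span (by simp)
  have hsl' : s (l + 1) ∈ P := subset_span (by simp)
  obtain ⟨i, hil, hiP⟩ : ∃ i ≤ l, s i ∉ P := by
    by_contra! hall
    have hcard : ({s l, s (l + 1), s (l + 2)} : Finset V).card < finrank K V :=
      Finset.card_le_three.trans_lt hV
    refine span_ne_top_of_card_lt_finrank hcard (top_le_iff.1 (htop ▸ span_le.2 ?_))
    have hPle : P ≤ span K {s l, s (l + 1), s (l + 2)} := span_mono (by grind)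
    push_cast
    rintro _ ⟨i, hi : i ≤ l + 2, rfl⟩
    obtain hi | rfl | rfl : i ≤ l ∨ i = l + 1 ∨ i = l + 2 := by omega
    · exact hPle (hall i hi)
    · exact hPle hsl'
    · exact subset_span (by simp)
  obtain ⟨j, hjl, hjP, hjmax⟩ := exists_last_notMem hil hiP hsl
  have hmem : ∀ i, j < i → i ≤ l + 1 → s i ∈ P := fun i hi hil =>
    hil.lt_or_eq.elim (fun h => hjmax i hi (by omega)) (fun h => h ▸ hsl')
  refine ⟨j, l, hjl, span_pair_eq_span_pair (hpair l) (hpair (j + 1))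
    (hmem _ (by omega) (by omega)) (hmem _ (by omega) (by omega)), ?_⟩
  refine linearIndependent_cons_snoc (hpair l) hjP fun h => hlast (span_mono ?_ h)
  rintro _ (rfl | rfl | rfl)
  exacts [mem_image_of_mem s (mem_Iic.2 (by omega)), mem_image_of_mem s (mem_Iic.2 (by omega)),
    mem_image_of_mem s (mem_Iic.2 (by omega))]

lemma exists_plane_stretch (hV : 3 < finrank K V)
    (hpair : ∀ j, LinearIndependent K ![s j, s (j + 1)])
    (hs : ∀ N, span K (s '' Ici N) = ⊤) (N : ℕ) :
    ∃ j l, N ≤ j ∧ j < l ∧ span K {s (j + 1), s (j + 2)} = span K {s l, s (l + 1)} ∧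
      LinearIndependent K ![s j, s l, s (l + 1), s (l + 2)] := by
  have hrange : range (fun j => s (N + j)) = s '' Ici N := by
    ext x
    simp only [mem_range, mem_image, mem_Ici]
    exact ⟨fun ⟨j, hj⟩ => ⟨N + j, by omega, hj⟩, fun ⟨j, hNj, hj⟩ =>
      ⟨j - N, by rwa [Nat.add_sub_cancel' hNj]⟩⟩
  obtain ⟨j, l, hjl, hspan, hli⟩ :=
    exists_plane_stretch_of_span_range hV (fun j => hpair (N + j)) (hrange ▸ hs N)
  exact ⟨N + j, N + l, by omega, by omega, hspan, hli⟩

end PlaneStretch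

/-! ### Consecutive minimal points -/

section Basic

variable {ι n m : Type*}

/-- The integer vectors in `ℚ^ι`. They are kept as rational vectors because the argument constantly
passes to the rational subspaces they span. -/
def lattice (ι : Type*) : AddSubgroup (ι → ℚ) := ((Int.castAddHom ℚ).compLeft ι).range

lemma mem_lattice_iff {v : ι → ℚ} : v ∈ lattice ι ↔ ∃ z : ι → ℤ, ∀ i, (z i : ℚ) = v i := by
  simp only [lattice, AddMonoidHom.mem_range, funext_iff]
  rfl

lemma exists_smul_mem_lattice [Finite ι] (v : ι → ℚ) : ∃ b : ℚ, b ≠ 0 ∧ b • v ∈ lattice ι := by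
  obtain ⟨b, hb⟩ := IsLocalization.exist_integer_multiples_of_finite (nonZeroDivisors ℤ) v
  choose z hz using hb
  refine ⟨b, Int.cast_ne_zero.2 (nonZeroDivisors.coe_ne_zero b), mem_lattice_iff.2 ⟨z, fun i => ?_⟩⟩
  simpa [Algebra.smul_def] using hz i

/-- The part `x` of a vector `(x, y)`, with real coordinates. -/
noncomputable def xPart : (n ⊕ m → ℚ) →ₗ[ℚ] (n → ℝ) :=
  (Algebra.linearMap ℚ ℝ).compLeft n ∘ₗ LinearMap.funLeft ℚ ℚ Sum.inl

@[simp]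
lemma xPart_apply (v : n ⊕ m → ℚ) (i : n) : xPart v i = (v (.inl i) : ℝ) := rfl

variable [Fintype n]

/-- The values `Θ x - y` of the linear forms at a vector `(x, y)`. -/
noncomputable def residual (Θ : Matrix m n ℝ) : (n ⊕ m → ℚ) →ₗ[ℚ] (m → ℝ) :=
  Θ.mulVecLin.restrictScalars ℚ ∘ₗ xPart -
    (Algebra.linearMap ℚ ℝ).compLeft m ∘ₗ LinearMap.funLeft ℚ ℚ Sum.inr

lemma residual_apply (Θ : Matrix m n ℝ) (v : n ⊕ m → ℚ) (k : m) :
    residual Θ v k = ∑ i, Θ k i * xPart v i - v (.inr k) := rfl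

/-- The `2 × 2` minor of `(x, Θ x - y)` at `u` and `v` in the `i`-th coordinate of `x` and the
`k`-th linear form. -/
noncomputable def mixedMinor (Θ : Matrix m n ℝ) (u v : n ⊕ m → ℚ) (i : n) (k : m) : ℝ :=
  xPart u i * residual Θ v k - xPart v i * residual Θ u k

lemma mixedMinor_comb (Θ : Matrix m n ℝ) (u v : n ⊕ m → ℚ) (a b c d : ℚ) (i : n) (k : m) :
    mixedMinor Θ (a • u + b • v) (c • u + d • v) i k =
      ((a * d - b * c : ℚ) : ℝ) * mixedMinor Θ u v i k := by
  simp only [mixedMinor, map_add, map_smul, Pi.add_apply, Pi.smul_apply, Rat.smul_def]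
  push_cast
  ring

/-- The height `max |x_i|` of a vector `(x, y)`. -/
noncomputable def height (v : n ⊕ m → ℚ) : ℝ := ‖xPart v‖

lemma height_nonneg (v : n ⊕ m → ℚ) : 0 ≤ height v := norm_nonneg _

@[simp]
lemma height_neg (v : n ⊕ m → ℚ) : height (-v) = height v := by
  rw [height, map_neg, norm_neg, height]

lemma abs_xPart_le (v : n ⊕ m → ℚ) (i : n) : |xPart v i| ≤ height v :=
  norm_le_pi_norm (xPart v) i

variable [Fintype m]

/-- The quality `max_k |(Θ x - y)_k|` of a vector `(x, y)` as an approximation. -/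
noncomputable def err (Θ : Matrix m n ℝ) (v : n ⊕ m → ℚ) : ℝ := ‖residual Θ v‖

lemma err_nonneg (Θ : Matrix m n ℝ) (v : n ⊕ m → ℚ) : 0 ≤ err Θ v := norm_nonneg _

lemma abs_residual_le (Θ : Matrix m n ℝ) (v : n ⊕ m → ℚ) (k : m) : |residual Θ v k| ≤ err Θ v :=
  norm_le_pi_norm (residual Θ v) k

lemma err_pos {Θ : Matrix m n ℝ} (hΘ : Function.Injective (residual Θ)) {v : n ⊕ m → ℚ}
    (hv : v ≠ 0) : 0 < err Θ v :=
  norm_pos_iff.2 ((map_ne_zero_iff _ hΘ).2 hv)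

lemma abs_mixedMinor_le (Θ : Matrix m n ℝ) {u v : n ⊕ m → ℚ} (hheight : height u ≤ height v)
    (herr : err Θ v ≤ err Θ u) (i : n) (k : m) :
    |mixedMinor Θ u v i k| ≤ 2 * (height v * err Θ u) := by
  have huv : |xPart u i * residual Θ v k| ≤ height v * err Θ u := by
    rw [abs_mul]
    exact mul_le_mul ((abs_xPart_le u i).trans hheight) ((abs_residual_le Θ v k).trans herr)
      (abs_nonneg _) (height_nonneg v)
  have hvu : |xPart v i * residual Θ u k| ≤ height v * err Θ u := by
    rw [abs_mul]
    exact mul_le_mul (abs_xPart_le v i) (abs_residual_le Θ u k) (abs_nonneg _) (height_nonneg v)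
  calc |mixedMinor Θ u v i k| ≤ |xPart u i * residual Θ v k| + |xPart v i * residual Θ u k| :=
        abs_sub _ _
    _ ≤ 2 * (height v * err Θ u) := by linarith

end Basic

lemma norm_map_comb_le_half {V E : Type*} [AddCommGroup V] [Module ℚ V] [NormedAddCommGroup E]
    [NormedSpace ℚ E] (f : V →ₗ[ℚ] E) {a b : ℚ} (ha : |a| ≤ 1 / 2) (hb : |b| ≤ 1 / 2) (u v : V) :
    ‖f (a • u + b • v)‖ ≤ (‖f u‖ + ‖f v‖) / 2 := by
  have norm_le_half {q : ℚ} (hq : |q| ≤ 1 / 2) : ‖q‖ ≤ 1 / 2 := by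
    rw [← Rat.norm_cast_real, Real.norm_eq_abs]
    simpa using (Rat.cast_le (K := ℝ)).2 hq
  rw [map_add, map_smul, map_smul]
  refine (norm_add_le _ _).trans ?_
  rw [norm_smul, norm_smul]
  nlinarith [norm_le_half ha, norm_le_half hb, norm_nonneg (f u), norm_nonneg (f v)]

section Consecutive

open Submodule

variable {n m : Type*} [Fintype n] [Fintype m]

/-- `u` and `v` are consecutive minimal points: integer vectors of increasing height and decreasing
error such that no nonzero integer vector of height less than that of `v` has a smaller error
than `u`. -/
structure Consecutive (Θ : Matrix m n ℝ) (u v : n ⊕ m → ℚ) : Prop where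
  left_mem : u ∈ lattice (n ⊕ m)
  right_mem : v ∈ lattice (n ⊕ m)
  height_pos : 0 < height u
  height_lt : height u < height v
  err_pos : 0 < err Θ v
  err_lt : err Θ v < err Θ u
  err_le : ∀ w ∈ lattice (n ⊕ m), w ≠ 0 → height w < height v → err Θ u ≤ err Θ w

namespace Consecutive

variable {Θ : Matrix m n ℝ} {u v u' v' w : n ⊕ m → ℚ}

lemma height_mul_err_pos (h : Consecutive Θ u v) : 0 < height v * err Θ u :=
  mul_pos (h.height_pos.trans h.height_lt) (h.err_pos.trans h.err_lt)

lemma exists_le_mixedMinor (h : Consecutive Θ u v) :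
    ∃ i k, height v * err Θ u / 4 ≤ |mixedMinor Θ u v i k| := by
  by_contra! hM
  rcases close_up_to_sign_of_minors_small (h.height_pos.trans h.height_lt)
    (h.err_pos.trans h.err_lt) h.height_lt.le h.err_lt.le hM with ⟨hx, hr⟩ | ⟨hx, hr⟩
  · have hne : u - v ≠ 0 := fun h0 => h.height_lt.ne (by rw [sub_eq_zero.1 h0])
    have := h.err_le _ (sub_mem h.left_mem h.right_mem) hne (by rwa [height, map_sub])
    rw [norm_sub_rev, ← map_sub] at hr
    exact this.not_gt hr
  · have hne : u + v ≠ 0 := fun h0 =>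
      h.height_lt.ne (by rw [eq_neg_of_add_eq_zero_left h0, height_neg])
    have := h.err_le _ (add_mem h.left_mem h.right_mem) hne (by rwa [height, map_add])
    rw [add_comm, ← map_add] at hr
    exact this.not_gt hr

lemma exists_mixedMinor_ne_zero (h : Consecutive Θ u v) : ∃ i k, mixedMinor Θ u v i k ≠ 0 := by
  obtain ⟨i, k, hik⟩ := h.exists_le_mixedMinor
  exact ⟨i, k, abs_pos.1 ((by linarith [h.height_mul_err_pos] : (0 : ℝ) < _).trans_le hik)⟩

lemma linearIndependent (h : Consecutive Θ u v) : LinearIndependent ℚ ![u, v] := by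
  rw [LinearIndependent.pair_iff]
  intro s t hst
  obtain ⟨i, k, hik⟩ := h.exists_mixedMinor_ne_zero
  have eq_zero_of_mul {q : ℚ} (hq : (q : ℝ) * mixedMinor Θ u v i k = 0) : q = 0 :=
    Rat.cast_eq_zero.1 ((mul_eq_zero.1 hq).resolve_right hik)
  have zero_minor (c d : ℚ) : mixedMinor Θ (s • u + t • v) (c • u + d • v) i k = 0 := by
    simp [hst, mixedMinor]
  constructor
  · simpa using eq_zero_of_mul ((mixedMinor_comb Θ u v s t 0 1 i k).symm.trans (zero_minor 0 1))
  · simpa using eq_zero_of_mul ((mixedMinor_comb Θ u v s t 1 0 i k).symm.trans (zero_minor 1 0))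

lemma eq_zero_of_abs_le_half (h : Consecutive Θ u v) {a b : ℚ}
    (hw : a • u + b • v ∈ lattice (n ⊕ m)) (ha : |a| ≤ 1 / 2) (hb : |b| ≤ 1 / 2) :
    a • u + b • v = 0 := by
  by_contra hne
  have hx : height (a • u + b • v) ≤ (height u + height v) / 2 := norm_map_comb_le_half _ ha hb u v
  have hr : err Θ (a • u + b • v) ≤ (err Θ u + err Θ v) / 2 := norm_map_comb_le_half _ ha hb u v
  have := h.err_le _ hw hne (by linarith [h.height_lt])
  linarith [h.err_lt]

lemma exists_int_comb (h : Consecutive Θ u v) (hw : w ∈ lattice (n ⊕ m))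
    (hspan : w ∈ span ℚ {u, v}) : ∃ a b : ℤ, w = (a : ℚ) • u + (b : ℚ) • v := by
  obtain ⟨a, b, rfl⟩ := mem_span_pair.1 hspan
  have hmem : (a - round a) • u + (b - round b) • v ∈ lattice (n ⊕ m) := by
    convert sub_mem hw (add_mem (zsmul_mem h.left_mem (round a))
      (zsmul_mem h.right_mem (round b))) using 1
    module
  refine ⟨round a, round b, sub_eq_zero.1 ?_⟩
  rw [← h.eq_zero_of_abs_le_half hmem (abs_sub_round a) (abs_sub_round b)]
  module

lemma height_mul_err_le_of_span_le (h : Consecutive Θ u v) (h' : Consecutive Θ u' v')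
    (hspan : span ℚ {u', v'} ≤ span ℚ {u, v}) :
    height v * err Θ u ≤ 8 * (height v' * err Θ u') := by
  obtain ⟨a, b, hu'⟩ := h.exists_int_comb h'.left_mem (hspan (mem_span_of_mem (by simp)))
  obtain ⟨c, d, hv'⟩ := h.exists_int_comb h'.right_mem (hspan (mem_span_of_mem (by simp)))
  have hminor : ∀ i k, mixedMinor Θ u' v' i k = ((a * d - b * c : ℤ) : ℝ) * mixedMinor Θ u v i k :=
    fun i k => by
      rw [hu', hv', mixedMinor_comb]
      push_cast
      rfl
  have hdet : a * d - b * c ≠ 0 := fun h0 => by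
    obtain ⟨i, k, hik⟩ := h'.exists_mixedMinor_ne_zero
    exact hik (by rw [hminor, h0, Int.cast_zero, zero_mul])
  obtain ⟨i, k, hik⟩ := h.exists_le_mixedMinor
  have hle : |mixedMinor Θ u v i k| ≤ |mixedMinor Θ u' v' i k| := by
    rw [hminor, abs_mul]
    exact le_mul_of_one_le_left (abs_nonneg _) (by exact_mod_cast Int.one_le_abs hdet)
  linarith [abs_mixedMinor_le Θ h'.height_lt.le h'.err_lt.le i k]

lemma exists_xMinor_ne_zero (h : Consecutive Θ u v) (hsmall : 2 * (height v * err Θ u) < 1) :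
    ∃ i j, xPart u i * xPart v j - xPart v i * xPart u j ≠ 0 := by
  by_contra! hzero
  obtain ⟨i, k, hik⟩ := h.exists_mixedMinor_ne_zero
  obtain ⟨z, hz⟩ := mem_lattice_iff.1 h.left_mem
  obtain ⟨z', hz'⟩ := mem_lattice_iff.1 h.right_mem
  have hsum : xPart u i * ∑ j, Θ k j * xPart v j = xPart v i * ∑ j, Θ k j * xPart u j := by
    simp only [Finset.mul_sum]
    refine Finset.sum_congr rfl fun j _ => ?_
    linear_combination Θ k j * hzero i j
  have hcast : mixedMinor Θ u v i k =
      ((z' (.inl i) * z (.inr k) - z (.inl i) * z' (.inr k) : ℤ) : ℝ) := by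
    rw [mixedMinor, residual_apply, residual_apply, mul_sub, mul_sub, hsum]
    simp only [xPart_apply, ← hz, ← hz']
    push_cast
    ring
  have hlt := (abs_mixedMinor_le Θ h.height_lt.le h.err_lt.le i k).trans_lt hsmall
  rw [hcast] at hlt hik
  exact hik (by exact_mod_cast Int.abs_lt_one_iff.1 (by exact_mod_cast hlt))

end Consecutive

end Consecutive

section Hyperplane

variable {n m : Type*}

/-- The vector `(c_m, -c_n)` of the transposed system attached to a linear functional
`c = (c_n, c_m)`. In terms of `x` and `Θ x - y`, the functional has coefficients
`Θᵀ c_m + c_n` in `x`, that is, the residual of this vector. -/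
def transposeVec (c : n ⊕ m → ℚ) : m ⊕ n → ℚ := Sum.elim (c ∘ .inr) (-(c ∘ .inl))

lemma transposeVec_ne_zero {c : n ⊕ m → ℚ} (hc : c ≠ 0) : transposeVec c ≠ 0 := fun h => hc <| by
  ext (i | k)
  · simpa [transposeVec] using congrFun h (.inr i)
  · simpa [transposeVec] using congrFun h (.inl k)

variable [Fintype n] [Fintype m]

lemma residual_transpose_dotProduct_xPart (Θ : Matrix m n ℝ) (c v : n ⊕ m → ℚ) :
    residual Θ.transpose (transposeVec c) ⬝ᵥ xPart v =
      ((c ⬝ᵥ v : ℚ) : ℝ) + ∑ k, c (.inr k) * residual Θ v k := by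
  simp only [dotProduct, residual_apply, transposeVec, xPart_apply, Matrix.transpose_apply,
    Fintype.sum_sum_type, Sum.elim_inl, Sum.elim_inr, Function.comp_apply, Pi.neg_apply]
  push_cast
  simp only [mul_sub, sub_mul, Finset.sum_sub_distrib, Finset.mul_sum, Finset.sum_mul, neg_mul,
    Finset.sum_neg_distrib]
  rw [Finset.sum_comm, Finset.sum_congr rfl fun k _ => Finset.sum_congr rfl fun i _ =>
    show Θ k i * c (.inr k) * v (.inl i) = c (.inr k) * (Θ k i * v (.inl i)) by ring]
  ring

lemma sum_residual_transpose_mul_xMinor (Θ : Matrix m n ℝ) {c u v : n ⊕ m → ℚ} (hu : c ⬝ᵥ u = 0)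
    (hv : c ⬝ᵥ v = 0) (i : n) :
    ∑ j, residual Θ.transpose (transposeVec c) j * (xPart u i * xPart v j - xPart v i * xPart u j) =
      ∑ k, c (.inr k) * mixedMinor Θ u v i k := by
  have hu' := residual_transpose_dotProduct_xPart Θ c u
  have hv' := residual_transpose_dotProduct_xPart Θ c v
  rw [hu, Rat.cast_zero, zero_add, dotProduct] at hu'
  rw [hv, Rat.cast_zero, zero_add, dotProduct] at hv'
  calc _ = xPart u i * ∑ j, residual Θ.transpose (transposeVec c) j * xPart v j -
        xPart v i * ∑ j, residual Θ.transpose (transposeVec c) j * xPart u j := by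
        rw [Finset.mul_sum, Finset.mul_sum, ← Finset.sum_sub_distrib]
        exact Finset.sum_congr rfl fun j _ => by ring
    _ = ∑ k, c (.inr k) * mixedMinor Θ u v i k := by
        rw [hu', hv', Finset.mul_sum, Finset.mul_sum, ← Finset.sum_sub_distrib]
        exact Finset.sum_congr rfl fun k _ => by rw [mixedMinor]; ring

lemma Consecutive.one_le_abs_xMinor {Θ : Matrix m (Fin 2) ℝ} {u v : Fin 2 ⊕ m → ℚ}
    (h : Consecutive Θ u v) (hsmall : 2 * (height v * err Θ u) < 1) :
    1 ≤ |xPart u 0 * xPart v 1 - xPart v 0 * xPart u 1| := by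
  obtain ⟨z, hz⟩ := mem_lattice_iff.1 h.left_mem
  obtain ⟨z', hz'⟩ := mem_lattice_iff.1 h.right_mem
  have hcast : xPart u 0 * xPart v 1 - xPart v 0 * xPart u 1 =
      ((z (.inl 0) * z' (.inl 1) - z' (.inl 0) * z (.inl 1) : ℤ) : ℝ) := by
    simp [← hz, ← hz']
  have hne : xPart u 0 * xPart v 1 - xPart v 0 * xPart u 1 ≠ 0 := fun h0 => by
    obtain ⟨i, j, hij⟩ := h.exists_xMinor_ne_zero hsmall
    fin_cases i <;> fin_cases j <;> grind
  rw [hcast] at hne ⊢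
  exact mod_cast Int.one_le_abs (Int.cast_ne_zero.1 hne)

lemma Consecutive.err_transposeVec_le {Θ : Matrix m (Fin 2) ℝ} {u v c : Fin 2 ⊕ m → ℚ}
    (h : Consecutive Θ u v) (hsmall : 2 * (height v * err Θ u) < 1) (hu : c ⬝ᵥ u = 0)
    (hv : c ⬝ᵥ v = 0) :
    err Θ.transpose (transposeVec c) ≤ (∑ k, |(c (.inr k) : ℝ)|) * (2 * (height v * err Θ u)) := by
  have hbound (i : Fin 2) : |∑ k, c (.inr k) * mixedMinor Θ u v i k| ≤
      (∑ k, |(c (.inr k) : ℝ)|) * (2 * (height v * err Θ u)) := by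
    rw [Finset.sum_mul]
    refine (Finset.abs_sum_le_sum_abs _ _).trans (Finset.sum_le_sum fun k _ => ?_)
    rw [abs_mul]
    gcongr
    exact abs_mixedMinor_le Θ h.height_lt.le h.err_lt.le i k
  have hmul (j : Fin 2) : |residual Θ.transpose (transposeVec c) j| *
      |xPart u 0 * xPart v 1 - xPart v 0 * xPart u 1| ≤
      (∑ k, |(c (.inr k) : ℝ)|) * (2 * (height v * err Θ u)) := by
    rw [← abs_mul]
    match j with
    | 0 =>
      refine le_of_eq_of_le ?_ (hbound 1)
      rw [← sum_residual_transpose_mul_xMinor Θ hu hv, Fin.sum_univ_two, ← abs_neg]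
      congr 1
      ring
    | 1 =>
      refine le_of_eq_of_le ?_ (hbound 0)
      rw [← sum_residual_transpose_mul_xMinor Θ hu hv, Fin.sum_univ_two]
      congr 1
      ring
  refine (pi_norm_le_iff_of_nonneg ?_).2 fun j => ?_
  · exact mul_nonneg (Finset.sum_nonneg fun _ _ => abs_nonneg _)
      (mul_nonneg zero_le_two h.height_mul_err_pos.le)
  · exact (le_mul_of_one_le_right (abs_nonneg _) (h.one_le_abs_xMinor hsmall)).trans (hmul j)

end Hyperplane

section MinimalSeq

variable {n m : Type*} [Fintype n] [Fintype m]

/-- A sequence of integer vectors any two neighbours of which are consecutive minimal points. -/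
def IsMinimalSeq (Θ : Matrix m n ℝ) (z : ℕ → n ⊕ m → ℚ) : Prop :=
  ∀ j, Consecutive Θ (z j) (z (j + 1))

namespace IsMinimalSeq

lemma span_image_Ici_eq_top {Θ : Matrix m (Fin 2) ℝ} {z : ℕ → Fin 2 ⊕ m → ℚ}
    (hz : IsMinimalSeq Θ z) (hΘ : Function.Injective (residual Θ.transpose))
    (hsmall : Tendsto (fun j => height (z (j + 1)) * err Θ (z j)) atTop (nhds 0)) (N : ℕ) :
    Submodule.span ℚ (z '' Set.Ici N) = ⊤ := by
  classical
  by_contra hne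
  obtain ⟨f, hf, hker⟩ := Submodule.exists_le_ker_of_lt_top _ (lt_top_iff_ne_top.2 hne)
  obtain ⟨c, rfl⟩ := (dotProductEquiv ℚ (Fin 2 ⊕ m)).surjective f
  have hc (j : ℕ) (hj : N ≤ j) : c ⬝ᵥ z j = 0 := hker (Submodule.subset_span ⟨j, hj, rfl⟩)
  have hc0 : c ≠ 0 := (map_ne_zero_iff _ (LinearEquiv.injective _)).1 hf
  have hpos : 0 < err Θ.transpose (transposeVec c) := err_pos hΘ (transposeVec_ne_zero hc0)
  have hlim : Tendsto (fun j => (∑ k, |(c (.inr k) : ℝ)|) *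
      (2 * (height (z (j + 1)) * err Θ (z j)))) atTop (nhds 0) := by
    simpa using (hsmall.const_mul 2).const_mul (∑ k, |(c (.inr k) : ℝ)|)
  obtain ⟨j, ⟨hlt, hhalf⟩, hj⟩ := (((hlim.eventually_lt_const hpos).and
    (hsmall.eventually_lt_const one_half_pos)).and (eventually_ge_atTop N)).exists
  exact hlt.not_ge ((hz j).err_transposeVec_le (by linarith) (hc j hj) (hc _ (by omega)))

end IsMinimalSeq

end MinimalSeq

section Determinant

open scoped Nat

variable {n m : Type*} [Fintype n] [Fintype m]

lemma one_le_abs_det_of_mem_lattice {ι : Type*} [Fintype ι] [DecidableEq ι] {z : ι → ι → ℚ}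
    (hz : ∀ p, z p ∈ lattice ι) (hli : LinearIndependent ℚ z) : 1 ≤ |(Matrix.of z).det| := by
  choose w hw using fun p => mem_lattice_iff.1 (hz p)
  have hdet : (Matrix.of z).det = ((Matrix.of w).det : ℚ) := by
    rw [Int.cast_det]
    congr 1
    ext p q
    exact (hw p q).symm
  have hne : (Matrix.of z).det ≠ 0 := ((Matrix.isUnit_iff_isUnit_det _).1
    (Matrix.linearIndependent_rows_iff_isUnit.1 hli)).ne_zero
  rw [hdet] at hne ⊢
  exact mod_cast Int.one_le_abs (Int.cast_ne_zero.1 hne)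

lemma abs_det_sumElim_xPart_residual [DecidableEq n] [DecidableEq m] (Θ : Matrix m n ℝ)
    (z : n ⊕ m → n ⊕ m → ℚ) :
    |(Matrix.of fun p => Sum.elim (xPart (z p)) (residual Θ (z p))).det| =
      ((|(Matrix.of z).det| : ℚ) : ℝ) := by
  have hmul : (Matrix.of fun p => Sum.elim (xPart (z p)) (residual Θ (z p))) =
      (Matrix.of z).map (Rat.castHom ℝ) * Matrix.fromBlocks 1 Θ.transpose 0 (-1) := by
    ext p (i | k)
    · simp [Matrix.mul_apply, Matrix.one_apply]
    · simp [Matrix.mul_apply, Matrix.one_apply, residual_apply, mul_comm, sub_eq_add_neg]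
  rw [hmul, Matrix.det_mul, Matrix.det_fromBlocks_zero₂₁, abs_mul, Matrix.det_one, one_mul,
    Matrix.det_neg, Matrix.det_one, mul_one, abs_pow, abs_neg, abs_one, one_pow, mul_one,
    ← RingHom.mapMatrix_apply, ← RingHom.map_det, eq_ratCast, Rat.cast_abs]

lemma one_le_factorial_mul_of_linearIndependent (Θ : Matrix m n ℝ) {z : n ⊕ m → n ⊕ m → ℚ}
    (hz : ∀ p, z p ∈ lattice (n ⊕ m)) (hli : LinearIndependent ℚ z) {B : ℝ}
    (hB : ∀ σ : Equiv.Perm (n ⊕ m),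
      (∏ i, height (z (σ (.inl i)))) * ∏ k, err Θ (z (σ (.inr k))) ≤ B) :
    1 ≤ (Fintype.card (n ⊕ m))! * B := by
  classical
  set N : Matrix (n ⊕ m) (n ⊕ m) ℝ := Matrix.of fun p => Sum.elim (xPart (z p)) (residual Θ (z p))
  have hterm (σ : Equiv.Perm (n ⊕ m)) : |(Equiv.Perm.sign σ) • ∏ p, N (σ p) p| ≤ B := by
    rw [Units.smul_def, zsmul_eq_mul, abs_mul, ← Int.cast_abs,
      Int.isUnit_iff_abs_eq.1 (Units.isUnit _), Int.cast_one, one_mul, Finset.abs_prod,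
      Fintype.prod_sum_type]
    refine (mul_le_mul ?_ ?_ ?_ ?_).trans (hB σ)
    · exact Finset.prod_le_prod (fun _ _ => abs_nonneg _) fun i _ => abs_xPart_le _ i
    · exact Finset.prod_le_prod (fun _ _ => abs_nonneg _) fun k _ => abs_residual_le Θ _ k
    · exact Finset.prod_nonneg fun _ _ => abs_nonneg _
    · exact Finset.prod_nonneg fun _ _ => height_nonneg _
  calc (1 : ℝ) ≤ |N.det| := by
        rw [abs_det_sumElim_xPart_residual]
        exact mod_cast one_le_abs_det_of_mem_lattice hz hli
    _ ≤ ∑ σ : Equiv.Perm (n ⊕ m), |(Equiv.Perm.sign σ) • ∏ p, N (σ p) p| := by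
        rw [Matrix.det_apply]
        exact Finset.abs_sum_le_sum_abs _ _
    _ ≤ ∑ _σ : Equiv.Perm (n ⊕ m), B := Finset.sum_le_sum fun σ _ => hterm σ
    _ = (Fintype.card (n ⊕ m))! * B := by
        rw [Finset.sum_const, Finset.card_univ, Fintype.card_perm, nsmul_eq_mul]

lemma one_le_mul_of_linearIndependent (Θ : Matrix (Fin 2) (Fin 2) ℝ)
    {w : Fin 4 → Fin 2 ⊕ Fin 2 → ℚ} (hw : ∀ p, w p ∈ lattice (Fin 2 ⊕ Fin 2))
    (hli : LinearIndependent ℚ w) (hheight : Monotone (height ∘ w)) (herr : Antitone (err Θ ∘ w)) :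
    1 ≤ 24 * (height (w 2) * height (w 3) * (err Θ (w 0) * err Θ (w 1))) := by
  have height_mul_le {p q : Fin 4} (hpq : p ≠ q) :
      height (w p) * height (w q) ≤ height (w 2) * height (w 3) := by
    wlog hlt : p < q generalizing p q
    · rw [mul_comm]
      exact this hpq.symm (by omega)
    exact mul_le_mul (hheight (show p ≤ 2 by omega)) (hheight (show q ≤ 3 by omega))
      (height_nonneg _) (height_nonneg _)
  have err_mul_le {p q : Fin 4} (hpq : p ≠ q) :
      err Θ (w p) * err Θ (w q) ≤ err Θ (w 0) * err Θ (w 1) := by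
    wlog hlt : p < q generalizing p q
    · rw [mul_comm]
      exact this hpq.symm (by omega)
    exact mul_le_mul (herr (show 0 ≤ p by omega)) (herr (show 1 ≤ q by omega))
      (err_nonneg _ _) (err_nonneg _ _)
  let e : Fin 2 ⊕ Fin 2 ≃ Fin 4 := finSumFinEquiv
  refine one_le_factorial_mul_of_linearIndependent Θ (z := w ∘ e) (fun p => hw _)
    (hli.comp _ e.injective) fun σ => ?_
  rw [Fin.prod_univ_two, Fin.prod_univ_two]
  exact mul_le_mul (height_mul_le (by simp)) (err_mul_le (by simp))
    (mul_nonneg (err_nonneg _ _) (err_nonneg _ _)) (mul_nonneg (height_nonneg _) (height_nonneg _))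

end Determinant

/-! ### Existence of minimal points -/

section Dirichlet

variable {n m : Type*} [Fintype n] [Fintype m]

lemma exists_ne_floor_mul_fract_eq (f : (n → ℤ) → m → ℝ) {M N : ℕ} (hM : 0 < M)
    (hMN : M ^ Fintype.card m < (N + 1) ^ Fintype.card n) :
    ∃ x x' : n → ℤ, x ≠ x' ∧ (∀ i, |x i - x' i| ≤ N) ∧
      ∀ k, ⌊M * Int.fract (f x k)⌋ = ⌊M * Int.fract (f x' k)⌋ := by
  classical
  have hM' : (0 : ℝ) < M := Nat.cast_pos.2 hM
  have hmaps : Set.MapsTo (fun x k => ⌊M * Int.fract (f x k)⌋)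
      (Fintype.piFinset fun _ : n => Finset.Icc 0 (N : ℤ))
      (Fintype.piFinset fun _ : m => Finset.Ico 0 (M : ℤ)) := fun x _ => by
    refine Finset.mem_coe.2 (Fintype.mem_piFinset.2 fun k => Finset.mem_Ico.2 ⟨?_, ?_⟩)
    · exact Int.floor_nonneg.2 (mul_nonneg hM'.le (Int.fract_nonneg _))
    · rw [Int.floor_lt, Int.cast_natCast]
      exact mul_lt_of_lt_one_right hM' (Int.fract_lt_one _)
  obtain ⟨x, hx, x', hx', hne, heq⟩ := Finset.exists_ne_map_eq_of_card_lt_of_maps_to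
    (by simpa [Fintype.card_piFinset] using hMN) hmaps
  refine ⟨x, x', hne, fun i => ?_, congrFun heq⟩
  have := Finset.mem_Icc.1 (Fintype.mem_piFinset.1 hx i)
  have := Finset.mem_Icc.1 (Fintype.mem_piFinset.1 hx' i)
  exact abs_le.2 ⟨by omega, by omega⟩

lemma exists_height_le_err_lt (Θ : Matrix m n ℝ) {M N : ℕ} (hM : 0 < M)
    (hMN : M ^ Fintype.card m < (N + 1) ^ Fintype.card n) :
    ∃ w ∈ lattice (n ⊕ m), 0 < height w ∧ height w ≤ N ∧ err Θ w < 1 / M := by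
  have hM' : (0 : ℝ) < M := Nat.cast_pos.2 hM
  let f : (n → ℤ) → m → ℝ := fun x => Θ.mulVec fun i => (x i : ℝ)
  obtain ⟨x, x', hne, hle, hfloor⟩ := exists_ne_floor_mul_fract_eq f hM hMN
  let z : n ⊕ m → ℤ := Sum.elim (x - x') fun k => ⌊f x k⌋ - ⌊f x' k⌋
  have hres (k : m) : residual Θ (fun p => (z p : ℚ)) k =
      Int.fract (f x k) - Int.fract (f x' k) := by
    simp only [residual_apply, xPart_apply, z, Sum.elim_inl, Sum.elim_inr, Pi.sub_apply, Int.fract,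
      f, Matrix.mulVec, dotProduct]
    push_cast
    simp only [mul_sub, Finset.sum_sub_distrib]
    ring
  refine ⟨fun p => z p, mem_lattice_iff.2 ⟨z, fun _ => rfl⟩, norm_pos_iff.2 fun h0 => hne ?_,
    (pi_norm_le_iff_of_nonneg N.cast_nonneg).2 fun i => ?_,
    (pi_norm_lt_iff (by positivity)).2 fun k => ?_⟩
  · ext i
    have := congrFun h0 i
    simp only [xPart_apply, z, Sum.elim_inl, Pi.sub_apply, Pi.zero_apply] at this
    exact sub_eq_zero.1 (by exact_mod_cast this)
  · simp only [xPart_apply, z, Sum.elim_inl, Pi.sub_apply, Real.norm_eq_abs]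
    exact_mod_cast hle i
  · rw [hres, Real.norm_eq_abs, lt_div_iff₀ hM', mul_comm]
    nth_rewrite 1 [← abs_of_pos hM']
    rw [← abs_mul, mul_sub]
    exact Int.abs_sub_lt_one_of_floor_eq_floor (hfloor k)

lemma exists_err_lt [Nonempty n] (Θ : Matrix m n ℝ) {ε : ℝ} (hε : 0 < ε) :
    ∃ w ∈ lattice (n ⊕ m), w ≠ 0 ∧ err Θ w < ε := by
  obtain ⟨M, hM⟩ := exists_nat_one_div_lt hε
  obtain ⟨w, hw, hpos, -, herr⟩ := exists_height_le_err_lt Θ M.succ_pos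
    (N := (M + 1) ^ Fintype.card m)
    ((Nat.lt_succ_self _).trans_le (Nat.le_self_pow Fintype.card_ne_zero _))
  exact ⟨w, hw, fun h0 => by simp [h0, height] at hpos, herr.trans (by exact_mod_cast hM)⟩

end Dirichlet

section MinimalPoint

variable {ι n m : Type*} [Fintype n] [Fintype m] {Θ : Matrix m n ℝ}

lemma finite_setOf_mem_lattice_abs_le [Finite ι] (C : ι → ℝ) :
    {v | v ∈ lattice ι ∧ ∀ i, |(v i : ℝ)| ≤ C i}.Finite := by
  refine ((Set.Finite.pi' fun i => Set.finite_Icc (-⌊C i⌋) ⌊C i⌋).image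
    fun z : ι → ℤ => fun i => (z i : ℚ)).subset ?_
  rintro v ⟨hv, hC⟩
  obtain ⟨z, hz⟩ := mem_lattice_iff.1 hv
  refine ⟨z, fun i => abs_le.1 (Int.le_floor.2 ?_), funext hz⟩
  have := hC i
  rw [← hz] at this
  exact_mod_cast this

lemma finite_setOf_height_le_err_le (Θ : Matrix m n ℝ) (H E : ℝ) :
    {v | v ∈ lattice (n ⊕ m) ∧ height v ≤ H ∧ err Θ v ≤ E}.Finite := by
  refine (finite_setOf_mem_lattice_abs_le
    (Sum.elim (fun _ => H) fun k => ∑ i, |Θ k i| * H + E)).subset ?_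
  rintro v ⟨hv, hH, hE⟩
  refine ⟨hv, ?_⟩
  rintro (i | k)
  · exact (abs_xPart_le v i).trans hH
  · have hy : (v (.inr k) : ℝ) = ∑ i, Θ k i * xPart v i - residual Θ v k := by
      rw [residual_apply]
      ring
    rw [hy]
    refine (abs_sub _ _).trans (add_le_add ((Finset.abs_sum_le_sum_abs _ _).trans
      (Finset.sum_le_sum fun i _ => ?_)) ((abs_residual_le Θ v k).trans hE))
    rw [abs_mul]
    exact mul_le_mul_of_nonneg_left ((abs_xPart_le v i).trans hH) (abs_nonneg _)

lemma height_pos_of_err_lt_one {w : n ⊕ m → ℚ} (hw : w ∈ lattice (n ⊕ m)) (hne : w ≠ 0)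
    (herr : err Θ w < 1) : 0 < height w := by
  refine norm_pos_iff.2 fun h0 => hne ?_
  obtain ⟨z, hz⟩ := mem_lattice_iff.1 hw
  ext (i | k)
  · exact Rat.cast_eq_zero.1 (congrFun h0 i)
  · have hlt := (abs_residual_le Θ w k).trans_lt herr
    rw [residual_apply, h0, ← hz] at hlt
    simp only [Pi.zero_apply, mul_zero, Finset.sum_const_zero, zero_sub, abs_neg, Rat.cast_intCast]
      at hlt
    have h0 : z (.inr k) = 0 := Int.abs_lt_one_iff.1 (by exact_mod_cast hlt)
    rw [← hz, h0, Int.cast_zero, Pi.zero_apply]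

/-- `v` is a minimal point (best approximation): its error is least among the nonzero integer
vectors of at most the same height. The bound `1` on the error excludes the vectors `(0, y)`. -/
structure IsMinimalPoint (Θ : Matrix m n ℝ) (v : n ⊕ m → ℚ) : Prop where
  mem : v ∈ lattice (n ⊕ m)
  ne_zero : v ≠ 0
  err_lt_one : err Θ v < 1
  err_le : ∀ w ∈ lattice (n ⊕ m), w ≠ 0 → height w ≤ height v → err Θ v ≤ err Θ w

lemma exists_isMinimalPoint_err_lt [Nonempty n] (Θ : Matrix m n ℝ) {ε : ℝ} (hε : 0 < ε)
    (hε' : ε ≤ 1) :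
    ∃ v, IsMinimalPoint Θ v ∧ err Θ v < ε ∧
      ∀ w ∈ lattice (n ⊕ m), w ≠ 0 → height w < height v → ε ≤ err Θ w := by
  obtain ⟨v₀, hv₀, hne₀, herr₀⟩ := exists_err_lt Θ hε
  let S := {v | v ∈ lattice (n ⊕ m) ∧ v ≠ 0 ∧ height v ≤ height v₀ ∧ err Θ v < ε}
  have hfin : S.Finite := (finite_setOf_height_le_err_le Θ (height v₀) ε).subset
    fun v hv => ⟨hv.1, hv.2.2.1, hv.2.2.2.le⟩
  obtain ⟨v, ⟨hv, hne, hheight, herr⟩, hmin⟩ := Set.exists_min_image S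
    (fun v => toLex (height v, err Θ v)) hfin ⟨v₀, hv₀, hne₀, le_rfl, herr₀⟩
  have hmin (w) (hw : w ∈ lattice (n ⊕ m)) (hw0 : w ≠ 0) (hwv : height w ≤ height v)
      (hwε : err Θ w < ε) : height v < height w ∨ height v = height w ∧ err Θ v ≤ err Θ w :=
    Prod.Lex.toLex_le_toLex.1 (hmin w ⟨hw, hw0, hwv.trans hheight, hwε⟩)
  refine ⟨v, ⟨hv, hne, herr.trans_le hε', fun w hw hw0 hwv => ?_⟩, herr, fun w hw hw0 hwv => ?_⟩
  · by_contra! hlt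
    rcases hmin w hw hw0 hwv (hlt.trans herr) with h | h
    exacts [h.not_ge hwv, h.2.not_gt hlt]
  · by_contra! hlt
    rcases hmin w hw hw0 hwv.le hlt with h | h
    exacts [h.not_gt hwv, h.1.not_gt hwv]

lemma IsMinimalPoint.exists_consecutive [Nonempty n] (hΘ : Function.Injective (residual Θ))
    {u : n ⊕ m → ℚ} (hu : IsMinimalPoint Θ u) : ∃ v, IsMinimalPoint Θ v ∧ Consecutive Θ u v := by
  obtain ⟨v, hv, herr, hmin⟩ :=
    exists_isMinimalPoint_err_lt Θ (err_pos hΘ hu.ne_zero) hu.err_lt_one.le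
  exact ⟨v, hv, hu.mem, hv.mem, height_pos_of_err_lt_one hu.mem hu.ne_zero hu.err_lt_one,
    not_le.1 fun h => (hu.err_le v hv.mem hv.ne_zero h).not_gt herr, err_pos hΘ hv.ne_zero, herr,
    hmin⟩

lemma exists_isMinimalSeq [Nonempty n] (hΘ : Function.Injective (residual Θ)) :
    ∃ z, IsMinimalSeq Θ z := by
  obtain ⟨v₀, hv₀, -⟩ := exists_isMinimalPoint_err_lt Θ one_pos le_rfl
  choose next hnext hcons using fun u : {u // IsMinimalPoint Θ u} => u.2.exists_consecutive hΘ
  let z : ℕ → {u // IsMinimalPoint Θ u} := Nat.rec ⟨v₀, hv₀⟩ fun _ u => ⟨next u, hnext u⟩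
  exact ⟨fun j => (z j).1, fun j => hcons (z j)⟩

end MinimalPoint

section Growth

variable {n m : Type*} [Fintype n]

lemma exists_natCast_eq_height {v : n ⊕ m → ℚ} (hv : v ∈ lattice (n ⊕ m)) :
    ∃ N : ℕ, height v = N := by
  obtain ⟨z, hz⟩ := mem_lattice_iff.1 hv
  rcases (height_nonneg v).eq_or_lt with h0 | hpos
  · exact ⟨0, by rw [← h0, Nat.cast_zero]⟩
  · obtain ⟨i, hi⟩ := exists_abs_apply_eq_norm hpos
    refine ⟨(z (.inl i)).natAbs, ?_⟩
    rw [height, ← hi, xPart_apply, ← hz, Nat.cast_natAbs]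
    push_cast
    rfl

variable [Fintype m] {Θ : Matrix m n ℝ}

lemma Consecutive.height_add_one_le {u v : n ⊕ m → ℚ} (h : Consecutive Θ u v) :
    height u + 1 ≤ height v := by
  obtain ⟨M, hM⟩ := exists_natCast_eq_height h.left_mem
  obtain ⟨N, hN⟩ := exists_natCast_eq_height h.right_mem
  have := h.height_lt
  rw [hM, hN] at this ⊢
  exact_mod_cast this

namespace IsMinimalSeq

variable {z : ℕ → n ⊕ m → ℚ}

lemma natCast_le_height (hz : IsMinimalSeq Θ z) (j : ℕ) : (j : ℝ) ≤ height (z j) := by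
  induction j with
  | zero => exact_mod_cast height_nonneg _
  | succ j ih =>
    push_cast
    linarith [(hz j).height_add_one_le]

lemma tendsto_height (hz : IsMinimalSeq Θ z) : Tendsto (fun j => height (z j)) atTop atTop :=
  tendsto_atTop_mono hz.natCast_le_height tendsto_natCast_atTop_atTop

lemma strictMono_height (hz : IsMinimalSeq Θ z) : StrictMono fun j => height (z j) :=
  strictMono_nat_of_lt_succ fun j => (hz j).height_lt

lemma strictAnti_err (hz : IsMinimalSeq Θ z) : StrictAnti fun j => err Θ (z j) :=
  strictAnti_nat_of_succ_lt fun j => (hz j).err_lt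

end IsMinimalSeq

end Growth

/-! ### Diophantine exponents -/

section Exponents

variable {n m : Type*} [Fintype n] [Fintype m] {Θ : Matrix m n ℝ} {γ γ' t : ℝ}

/-- The irrationality measure function `ψ` of `Θ`: the least error of an integer vector of nonzero
height at most `t` (and `0`, as the infimum of the empty set, for `t < 1`). -/
noncomputable def psi (Θ : Matrix m n ℝ) (t : ℝ) : ℝ :=
  sInf (err Θ '' {w | w ∈ lattice (n ⊕ m) ∧ 0 < height w ∧ height w ≤ t})

lemma psi_nonneg (Θ : Matrix m n ℝ) (t : ℝ) : 0 ≤ psi Θ t :=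
  Real.sInf_nonneg (Set.forall_mem_image.2 fun w _ => err_nonneg Θ w)

lemma psi_le_err {w : n ⊕ m → ℚ} (hw : w ∈ lattice (n ⊕ m)) (hpos : 0 < height w)
    (hle : height w ≤ t) : psi Θ t ≤ err Θ w :=
  csInf_le ⟨0, Set.forall_mem_image.2 fun w _ => err_nonneg Θ w⟩ ⟨w, ⟨hw, hpos, hle⟩, rfl⟩

lemma Consecutive.err_le_psi {u v : n ⊕ m → ℚ} (h : Consecutive Θ u v) (hu : height u ≤ t)
    (hv : t < height v) : err Θ u ≤ psi Θ t := by
  refine le_csInf ⟨_, u, ⟨h.left_mem, h.height_pos, hu⟩, rfl⟩ (Set.forall_mem_image.2 ?_)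
  rintro w ⟨hw, hpos, hle⟩
  exact h.err_le w hw (fun h0 => by simp [h0, height] at hpos) (hle.trans_lt hv)

/-- `γ` is a uniform exponent of `Θ`, that is, `limsup t ^ γ * ψ(t) < ∞`; the uniform Diophantine
exponent `ω̂` is the supremum of these. -/
def IsUniformExponent (Θ : Matrix m n ℝ) (γ : ℝ) : Prop :=
  ∃ C, ∀ᶠ t in atTop, t ^ γ * psi Θ t ≤ C

/-- `γ` is an ordinary exponent of `Θ`, that is, `liminf t ^ γ * ψ(t) < ∞`; the ordinary Diophantine
exponent `ω` is the supremum of these. -/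
def IsOrdinaryExponent (Θ : Matrix m n ℝ) (γ : ℝ) : Prop :=
  ∃ C, ∃ᶠ t in atTop, t ^ γ * psi Θ t ≤ C

lemma IsUniformExponent.isOrdinaryExponent (h : IsUniformExponent Θ γ) : IsOrdinaryExponent Θ γ :=
  h.imp fun _ hC => hC.frequently

lemma IsUniformExponent.mono (h : IsUniformExponent Θ γ) (hle : γ' ≤ γ) :
    IsUniformExponent Θ γ' := by
  refine h.imp fun C hC => ?_
  filter_upwards [hC, eventually_ge_atTop 1] with t ht ht1
  exact (mul_le_mul_of_nonneg_right (Real.rpow_le_rpow_of_exponent_le ht1 hle)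
    (psi_nonneg Θ t)).trans ht

lemma isUniformExponent_of_not_injective (hΘ : ¬Function.Injective (residual Θ)) (γ : ℝ) :
    IsUniformExponent Θ γ := by
  obtain ⟨v, hv, hv0⟩ : ∃ v, residual Θ v = 0 ∧ v ≠ 0 := by
    simpa [injective_iff_map_eq_zero] using hΘ
  obtain ⟨b, hb, hmem⟩ := exists_smul_mem_lattice v
  have herr : err Θ (b • v) = 0 := by rw [err, map_smul, hv, smul_zero, norm_zero]
  have hpos : 0 < height (b • v) :=
    height_pos_of_err_lt_one hmem (smul_ne_zero hb hv0) (herr.trans_lt one_pos)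
  refine ⟨0, ?_⟩
  filter_upwards [eventually_ge_atTop (height (b • v))] with t ht
  have hpsi : psi Θ t ≤ 0 := (psi_le_err hmem hpos ht).trans_eq herr
  exact mul_nonpos_of_nonneg_of_nonpos (Real.rpow_nonneg (hpos.le.trans ht) γ) hpsi

lemma isUniformExponent_one [Nonempty n] (Θ : Matrix m n ℝ)
    (hcard : Fintype.card m ≤ Fintype.card n) : IsUniformExponent Θ 1 := by
  refine ⟨2, ?_⟩
  filter_upwards [eventually_ge_atTop 1] with t ht
  have hN : 0 < ⌊t⌋₊ := Nat.floor_pos.2 ht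
  have hN1 : (1 : ℝ) ≤ ⌊t⌋₊ := by exact_mod_cast hN
  obtain ⟨w, hw, hpos, hle, herr⟩ := exists_height_le_err_lt Θ hN
    ((Nat.pow_le_pow_right hN hcard).trans_lt
      (Nat.pow_lt_pow_left (Nat.lt_succ_self _) Fintype.card_ne_zero))
  calc t ^ (1 : ℝ) * psi Θ t ≤ (2 * ⌊t⌋₊) * (1 / ⌊t⌋₊) := by
        rw [Real.rpow_one]
        refine mul_le_mul (by linarith [Nat.lt_floor_add_one t]) ?_ (psi_nonneg Θ t) (by positivity)
        exact (psi_le_err hw hpos (hle.trans (Nat.floor_le (by linarith)))).trans herr.le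
    _ = 2 := by field_simp

namespace IsMinimalSeq

variable {z : ℕ → n ⊕ m → ℚ}

lemma exists_rpow_mul_err_le (hz : IsMinimalSeq Θ z) (hγ : 0 ≤ γ) (h : IsUniformExponent Θ γ) :
    ∃ C, ∀ᶠ j in atTop, height (z (j + 1)) ^ γ * err Θ (z j) ≤ C := by
  obtain ⟨C, hC⟩ := h
  have htend : Tendsto (fun j => (height (z j) + height (z (j + 1))) / 2) atTop atTop :=
    (hz.tendsto_height.atTop_add_atTop
      (hz.tendsto_height.comp (tendsto_add_atTop_nat 1))).atTop_div_const zero_lt_two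
  refine ⟨2 ^ γ * C, (htend.eventually hC).mono fun j hj => ?_⟩
  have hpos := (hz j).height_pos
  have hlt := (hz j).height_lt
  set t := (height (z j) + height (z (j + 1))) / 2 with ht
  have hpsi : err Θ (z j) ≤ psi Θ t := (hz j).err_le_psi (by linarith) (by linarith)
  calc height (z (j + 1)) ^ γ * err Θ (z j) ≤ (2 * t) ^ γ * psi Θ t :=
        mul_le_mul (Real.rpow_le_rpow (height_nonneg _) (by linarith) hγ) hpsi (err_nonneg _ _)
          (Real.rpow_nonneg (by linarith) _)
    _ = 2 ^ γ * (t ^ γ * psi Θ t) := by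
        rw [Real.mul_rpow zero_le_two (by linarith), mul_assoc]
    _ ≤ 2 ^ γ * C := by gcongr

lemma eventually_one_le_rpow_mul_err (hz : IsMinimalSeq Θ z) (h : ¬IsOrdinaryExponent Θ γ) :
    ∀ᶠ j in atTop, 1 ≤ height (z j) ^ γ * err Θ (z j) := by
  have hlow : ∀ᶠ t in atTop, 1 < t ^ γ * psi Θ t := by
    simpa using not_exists.1 h 1
  refine (hz.tendsto_height.eventually hlow).mono fun j hj => hj.le.trans ?_
  exact mul_le_mul_of_nonneg_left (psi_le_err (hz j).left_mem (hz j).height_pos le_rfl)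
    (Real.rpow_nonneg (height_nonneg _) _)

lemma tendsto_height_mul_err (hz : IsMinimalSeq Θ z) (hγ : 1 < γ) (h : IsUniformExponent Θ γ) :
    Tendsto (fun j => height (z (j + 1)) * err Θ (z j)) atTop (nhds 0) := by
  obtain ⟨C, hC⟩ := hz.exists_rpow_mul_err_le (by linarith) h
  have hlim : Tendsto (fun j => height (z (j + 1)) ^ (-(γ - 1)) * C) atTop (nhds 0) := by
    simpa using ((tendsto_rpow_neg_atTop (sub_pos.2 hγ)).comp
      (hz.tendsto_height.comp (tendsto_add_atTop_nat 1))).mul_const C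
  refine squeeze_zero' (.of_forall fun j => (hz j).height_mul_err_pos.le)
    (hC.mono fun j hj => ?_) hlim
  have hpos := (hz (j + 1)).height_pos
  calc height (z (j + 1)) * err Θ (z j)
      = height (z (j + 1)) ^ (-(γ - 1)) * (height (z (j + 1)) ^ γ * err Θ (z j)) := by
        rw [← mul_assoc, ← Real.rpow_add hpos, neg_sub, sub_add_cancel, Real.rpow_one]
    _ ≤ height (z (j + 1)) ^ (-(γ - 1)) * C := by gcongr

end IsMinimalSeq

end Exponents

section Logarithms

variable {n m : Type*} [Fintype n]

/-- The logarithm of the height, the coordinate in which the bounds on heights and errors become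
linear. -/
noncomputable def logHeight (v : n ⊕ m → ℚ) : ℝ := Real.log (height v)

variable [Fintype m]

/-- The logarithm of the error, the coordinate in which the bounds on heights and errors become
linear. -/
noncomputable def logErr (Θ : Matrix m n ℝ) (v : n ⊕ m → ℚ) : ℝ := Real.log (err Θ v)

namespace IsMinimalSeq

variable {Θ : Matrix m n ℝ} {z : ℕ → n ⊕ m → ℚ} {γ : ℝ}

lemma height_pos (hz : IsMinimalSeq Θ z) (j : ℕ) : 0 < height (z j) := (hz j).height_pos

lemma err_pos (hz : IsMinimalSeq Θ z) (j : ℕ) : 0 < err Θ (z j) :=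
  (hz j).err_pos.trans (hz j).err_lt

lemma height_mul_err_pos (hz : IsMinimalSeq Θ z) (i j : ℕ) : 0 < height (z i) * err Θ (z j) :=
  mul_pos (hz.height_pos i) (hz.err_pos j)

lemma log_height_mul_err (hz : IsMinimalSeq Θ z) (i j : ℕ) :
    Real.log (height (z i) * err Θ (z j)) = logHeight (z i) + logErr Θ (z j) :=
  Real.log_mul (hz.height_pos i).ne' (hz.err_pos j).ne'

lemma log_height_rpow_mul_err (hz : IsMinimalSeq Θ z) (γ : ℝ) (i j : ℕ) :
    Real.log (height (z i) ^ γ * err Θ (z j)) = γ * logHeight (z i) + logErr Θ (z j) := by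
  rw [Real.log_mul (Real.rpow_pos_of_pos (hz.height_pos i) γ).ne' (hz.err_pos j).ne',
    Real.log_rpow (hz.height_pos i), logHeight, logErr]

lemma monotone_logHeight (hz : IsMinimalSeq Θ z) : Monotone fun j => logHeight (z j) :=
  fun i _ hij => Real.log_le_log (hz.height_pos i) (hz.strictMono_height.monotone hij)

lemma tendsto_logHeight (hz : IsMinimalSeq Θ z) :
    Tendsto (fun j => logHeight (z j)) atTop atTop :=
  Real.tendsto_log_atTop.comp hz.tendsto_height

lemma exists_logErr_le (hz : IsMinimalSeq Θ z) (hγ : 0 ≤ γ) (h : IsUniformExponent Θ γ) :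
    ∃ c, ∀ᶠ j in atTop, logErr Θ (z j) ≤ c - γ * logHeight (z (j + 1)) := by
  obtain ⟨C, hC⟩ := hz.exists_rpow_mul_err_le hγ h
  refine ⟨Real.log C, hC.mono fun j hj => le_sub_iff_add_le'.2 ?_⟩
  rw [← hz.log_height_rpow_mul_err]
  exact Real.log_le_log
    (mul_pos (Real.rpow_pos_of_pos (hz.height_pos _) _) (hz.err_pos j)) hj

lemma eventually_le_logErr (hz : IsMinimalSeq Θ z) (h : ¬IsOrdinaryExponent Θ γ) :
    ∀ᶠ j in atTop, -(γ * logHeight (z j)) ≤ logErr Θ (z j) :=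
  (hz.eventually_one_le_rpow_mul_err h).mono fun j hj => neg_le_iff_add_nonneg'.2 <| by
    rw [← hz.log_height_rpow_mul_err]
    exact Real.log_nonneg hj

end IsMinimalSeq

end Logarithms

section ExponentBound

/-- The right-hand side of the inequality between the exponents, as a function of `η = ω̂`: the
positive root of `ω ^ 2 + (η - 1) * ω = η * (2 * η ^ 2 - 2 * η + 1)`. -/
noncomputable def exponentBound (η : ℝ) : ℝ :=
  (1 - η + √((1 - η) ^ 2 + 4 * η * (2 * η ^ 2 - 2 * η + 1))) / 2

lemma continuous_exponentBound : Continuous exponentBound := by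
  unfold exponentBound
  fun_prop

lemma exists_mem_Ioo_lt_exponentBound {a b x : ℝ} (hab : a < b) (hx : x < exponentBound b) :
    ∃ η ∈ Set.Ioo a b, x < exponentBound η :=
  (Eventually.and (Ioo_mem_nhdsLT hab)
    (((continuous_exponentBound.tendsto b).eventually_const_lt hx).filter_mono
      nhdsWithin_le_nhds)).exists

lemma exponentBound_le_one {η : ℝ} (h₀ : 0 ≤ η) (h₁ : η ≤ 1) : exponentBound η ≤ 1 := by
  have hsqrt : √((1 - η) ^ 2 + 4 * η * (2 * η ^ 2 - 2 * η + 1)) ≤ 1 + η :=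
    Real.sqrt_le_iff.2 ⟨by linarith, by nlinarith [mul_nonneg (mul_nonneg h₀ h₀) (sub_nonneg.2 h₁)]⟩
  rw [exponentBound]
  linarith

lemma sq_add_mul_lt_of_lt_exponentBound {η ω : ℝ} (hη : 1 ≤ η + 2 * ω) (hω : ω < exponentBound η) :
    ω ^ 2 + (η - 1) * ω < η * (2 * η ^ 2 - 2 * η + 1) := by
  rw [exponentBound] at hω
  have hlt : 2 * ω - (1 - η) < √((1 - η) ^ 2 + 4 * η * (2 * η ^ 2 - 2 * η + 1)) := by linarith
  linarith [(Real.lt_sqrt (by linarith)).1 hlt]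

lemma exists_bound_of_lt_exponentBound {η ω : ℝ} (c₁ c₂ c₃ : ℝ) (hη : 1 < η) (hηω : η ≤ ω)
    (hω : ω < exponentBound η) :
    ∃ A₀, ∀ A B Γ, 0 ≤ B → η * Γ ≤ ω * B + c₁ → η * A + (η - 1) * B ≤ Γ + c₂ →
      (η - 1) * B ≤ (ω - 1) * A + c₃ → A ≤ A₀ := by
  have hquad := sq_add_mul_lt_of_lt_exponentBound (by linarith) hω
  set u := max (ω - η ^ 2 + η) 0 with hu
  have hpos : 0 < (η - 1) * η ^ 2 - u * (ω - 1) := by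
    rcases max_cases (ω - η ^ 2 + η) 0 with ⟨h, -⟩ | ⟨h, -⟩ <;> rw [hu, h]
    · nlinarith [mul_nonneg (sq_nonneg η) (sub_nonneg.2 hηω)]
    · nlinarith
  refine ⟨(u * c₃ + (η - 1) * (c₁ + η * c₂)) / ((η - 1) * η ^ 2 - u * (ω - 1)),
    fun A B Γ hB h₁ h₂ h₃ => (le_div_iff₀ hpos).2 ?_⟩
  have hA : η ^ 2 * A ≤ u * B + (c₁ + η * c₂) := by
    have := mul_le_mul_of_nonneg_left h₂ (by linarith : 0 ≤ η)
    have := mul_le_mul_of_nonneg_right (le_max_left (ω - η ^ 2 + η) 0) hB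
    linarith
  have := mul_le_mul_of_nonneg_left hA (sub_nonneg.2 hη.le)
  have := mul_le_mul_of_nonneg_left h₃ (le_max_right (ω - η ^ 2 + η) 0)
  linarith

end ExponentBound

section TwoByTwo

lemma IsMinimalSeq.exists_plane_le_and_det_le {Θ : Matrix (Fin 2) (Fin 2) ℝ}
    {z : ℕ → Fin 2 ⊕ Fin 2 → ℚ} (hz : IsMinimalSeq Θ z)
    (hΘ : Function.Injective (residual Θ.transpose))
    (hsmall : Tendsto (fun j => height (z (j + 1)) * err Θ (z j)) atTop (nhds 0)) (N : ℕ) :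
    ∃ j l, N ≤ j ∧ j < l ∧
      height (z (j + 2)) * err Θ (z (j + 1)) ≤ 8 * (height (z (l + 1)) * err Θ (z l)) ∧
      1 ≤ 24 * (height (z (l + 1)) * height (z (l + 2)) * (err Θ (z j) * err Θ (z l))) := by
  obtain ⟨j, l, hNj, hjl, hspan, hli⟩ := exists_plane_stretch (K := ℚ) (by simp)
    (fun j => (hz j).linearIndependent) (hz.span_image_Ici_eq_top hΘ hsmall) N
  refine ⟨j, l, hNj, hjl, (hz (j + 1)).height_mul_err_le_of_span_le (hz l) hspan.ge, ?_⟩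
  have hmono : Monotone ![j, l, l + 1, l + 2] := by
    refine Fin.monotone_iff_le_succ.2 fun i => ?_
    fin_cases i <;> simp [hjl.le]
  have hcomp : z ∘ ![j, l, l + 1, l + 2] = ![z j, z l, z (l + 1), z (l + 2)] := by
    ext i : 1
    fin_cases i <;> rfl
  exact one_le_mul_of_linearIndependent Θ (w := z ∘ ![j, l, l + 1, l + 2])
    (fun p => (hz _).left_mem) (by rwa [hcomp])
    (hz.strictMono_height.monotone.comp hmono) (hz.strictAnti_err.antitone.comp_monotone hmono)

lemma IsMinimalSeq.exists_log_plane_le_and_log_det_nonneg {Θ : Matrix (Fin 2) (Fin 2) ℝ}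
    {z : ℕ → Fin 2 ⊕ Fin 2 → ℚ} (hz : IsMinimalSeq Θ z)
    (hΘ : Function.Injective (residual Θ.transpose))
    (hsmall : Tendsto (fun j => height (z (j + 1)) * err Θ (z j)) atTop (nhds 0)) (N : ℕ) :
    ∃ j l, N ≤ j ∧ j < l ∧
      logHeight (z (j + 2)) + logErr Θ (z (j + 1)) ≤
        Real.log 8 + (logHeight (z (l + 1)) + logErr Θ (z l)) ∧
      0 ≤ Real.log 24 + (logHeight (z (l + 1)) + logErr Θ (z j) +
        (logHeight (z (l + 2)) + logErr Θ (z l))) := by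
  obtain ⟨j, l, hNj, hjl, hplane, hdet⟩ := hz.exists_plane_le_and_det_le hΘ hsmall N
  refine ⟨j, l, hNj, hjl, ?_, ?_⟩
  · rw [← hz.log_height_mul_err, ← hz.log_height_mul_err,
      ← Real.log_mul (by norm_num) (hz.height_mul_err_pos _ _).ne']
    exact Real.log_le_log (hz.height_mul_err_pos _ _) hplane
  · have hpos := hz.height_mul_err_pos
    rw [← hz.log_height_mul_err, ← hz.log_height_mul_err,
      ← Real.log_mul (hpos _ _).ne' (hpos _ _).ne',
      ← Real.log_mul (by norm_num) (mul_pos (hpos _ _) (hpos _ _)).ne', mul_mul_mul_comm]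
    exact Real.log_nonneg hdet

theorem isOrdinaryExponent_of_lt_exponentBound {Θ : Matrix (Fin 2) (Fin 2) ℝ}
    (hΘ : Function.Injective (residual Θ.transpose)) {η ω : ℝ} (hη : 1 < η)
    (h : IsUniformExponent Θ η) (hω : ω < exponentBound η) : IsOrdinaryExponent Θ ω := by
  rcases le_total ω η with hωη | hηω
  · exact (h.mono hωη).isOrdinaryExponent
  by_contra hord
  obtain ⟨z, hz⟩ := exists_isMinimalSeq <| not_not.1 fun hinj =>
    hord (isUniformExponent_of_not_injective hinj ω).isOrdinaryExponent
  obtain ⟨c, hupper⟩ := hz.exists_logErr_le (by linarith) h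
  have hlower := hz.eventually_le_logErr hord
  obtain ⟨A₀, hA₀⟩ := exists_bound_of_lt_exponentBound c (Real.log 24 + 2 * c) (Real.log 8 + c)
    hη hηω hω
  have htop := hz.tendsto_logHeight
  obtain ⟨N, hN⟩ := eventually_atTop.1 (hupper.and (hlower.and
    ((htop.eventually_gt_atTop A₀).and (htop.eventually_ge_atTop 0))))
  obtain ⟨j, l, hNj, hjl, hplane, hdet⟩ :=
    hz.exists_log_plane_le_and_log_det_nonneg hΘ (hz.tendsto_height_mul_err hη h) N
  obtain ⟨hup_j, -⟩ := hN j hNj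
  obtain ⟨-, hlow_j, hlarge, -⟩ := hN (j + 1) (by omega)
  obtain ⟨hup_l, -⟩ := hN l (by omega)
  obtain ⟨hup_l', hlow_l', -, hnonneg⟩ := hN (l + 1) (by omega)
  have hmono := hz.monotone_logHeight (by omega : j + 1 ≤ j + 2)
  exact hlarge.not_ge (hA₀ _ _ (logHeight (z (l + 2))) hnonneg (by linarith) (by linarith)
    (by linarith))

end TwoByTwo

/-! ### Comparison with the explicit form -/

lemma residual_injective_of_forall_int {n m : Type*} [Fintype n] [Finite m] {Θ : Matrix m n ℝ}
    (hΘ : ∀ x : n → ℤ, x ≠ 0 → ∀ y : m → ℤ, Θ.mulVec (fun i => (x i : ℝ)) ≠ fun k => (y k : ℝ)) :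
    Function.Injective (residual Θ) := by
  refine (injective_iff_map_eq_zero _).2 fun v hv => ?_
  obtain ⟨b, hb, hmem⟩ := exists_smul_mem_lattice v
  obtain ⟨z, hz⟩ := mem_lattice_iff.1 hmem
  have hzv : (fun p => (z p : ℚ)) = b • v := funext hz
  have hres : Θ.mulVec (fun i => (z (.inl i) : ℝ)) = fun k => (z (.inr k) : ℝ) := by
    ext k
    have h : residual Θ (fun p => (z p : ℚ)) k = 0 := by rw [hzv, map_smul, hv, smul_zero]; rfl
    simpa [residual_apply, Matrix.mulVec, dotProduct, sub_eq_zero] using h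
  have hx : (fun i => z (.inl i)) = 0 := not_not.1 fun hne => hΘ _ hne _ hres
  have hzero : z = 0 := by
    ext (i | k)
    · exact congrFun hx i
    · have := congrFun hres k
      simp only [congrFun hx, Pi.zero_apply, Int.cast_zero, Matrix.mulVec, dotProduct, mul_zero,
        Finset.sum_const_zero] at this
      exact_mod_cast this.symm
  exact (smul_eq_zero.1 (hzv.symm.trans (by simp only [hzero]; rfl))).resolve_left hb

section TwoByTwo

variable {θ11 θ12 θ21 θ22 : ℝ}

lemma residual_injective_of_forall_int_fin_two
    (hgood : ∀ x₁ x₂ : ℤ, ¬(x₁ = 0 ∧ x₂ = 0) →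
      ¬∃ y₁ y₂ : ℤ, θ11 * x₁ + θ12 * x₂ = (y₁ : ℝ) ∧ θ21 * x₁ + θ22 * x₂ = (y₂ : ℝ)) :
    Function.Injective (residual !![θ11, θ12; θ21, θ22]) := by
  refine residual_injective_of_forall_int fun x hx y hy => ?_
  refine hgood (x 0) (x 1) (fun h => hx ?_) ⟨y 0, y 1, ?_, ?_⟩
  · ext i
    fin_cases i
    exacts [h.1, h.2]
  · simpa [Matrix.mulVec, dotProduct] using congrFun hy 0
  · simpa [Matrix.mulVec, dotProduct] using congrFun hy 1

lemma transpose_ne_int_of_linearIndependent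
    (hindep : LinearIndependent ℚ ![(1 : ℝ), θ11, θ12, θ21, θ22]) (y₁ y₂ : ℤ)
    (hy : ¬(y₁ = 0 ∧ y₂ = 0)) :
    ¬∃ x₁ x₂ : ℤ, θ11 * y₁ + θ21 * y₂ = (x₁ : ℝ) ∧ θ12 * y₁ + θ22 * y₂ = (x₂ : ℝ) := by
  rintro ⟨x₁, -, h, -⟩
  have hzero := Fintype.linearIndependent_iff.1 hindep ![-x₁, y₁, 0, y₂, 0] (by
    simp only [Fin.sum_univ_five, Matrix.cons_val, Rat.smul_def]
    push_cast
    linarith)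
  exact hy ⟨by simpa using hzero 1, by simpa using hzero 3⟩

lemma norm_fin_two (f : Fin 2 → ℝ) : ‖f‖ = max |f 0| |f 1| := by
  rw [Pi.norm_def, Fin.univ_succ]
  simp

lemma height_intCast_fin_two {m : Type*} (z : Fin 2 ⊕ m → ℤ) :
    height (fun p => (z p : ℚ)) = ((max |z (.inl 0)| |z (.inl 1)| : ℤ) : ℝ) := by
  simp [height, norm_fin_two]

lemma err_intCast_fin_two (θ11 θ12 θ21 θ22 : ℝ) (z : Fin 2 ⊕ Fin 2 → ℤ) :
    err !![θ11, θ12; θ21, θ22] (fun p => (z p : ℚ)) =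
      max |θ11 * z (.inl 0) + θ12 * z (.inl 1) - z (.inr 0)|
        |θ21 * z (.inl 0) + θ22 * z (.inl 1) - z (.inr 1)| := by
  simp [err, norm_fin_two, residual_apply]

lemma psiM_eq_psi (θ11 θ12 θ21 θ22 t : ℝ) :
    psiM θ11 θ12 θ21 θ22 t = psi !![θ11, θ12; θ21, θ22] t := by
  refine csInf_eq_csInf_of_forall_exists_le ?_ (Set.forall_mem_image.2 ?_)
  · rintro _ ⟨x₁, x₂, hpos, hle, rfl⟩
    let z : Fin 2 ⊕ Fin 2 → ℤ :=
      Sum.elim ![x₁, x₂] ![round (θ11 * x₁ + θ12 * x₂), round (θ21 * x₁ + θ22 * x₂)]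
    have hz : height (fun p => (z p : ℚ)) = ((max |x₁| |x₂| : ℤ) : ℝ) := height_intCast_fin_two z
    refine ⟨_, ⟨fun p => (z p : ℚ), ⟨mem_lattice_iff.2 ⟨z, fun _ => rfl⟩, ?_, ?_⟩, rfl⟩,
      (err_intCast_fin_two θ11 θ12 θ21 θ22 z).le⟩
    · rw [hz]
      exact_mod_cast hpos
    · rwa [hz]
  · rintro w ⟨hw, hpos, hle⟩
    obtain ⟨z, hz⟩ := mem_lattice_iff.1 hw
    obtain rfl := funext hz
    rw [height_intCast_fin_two] at hpos hle
    refine ⟨_, ⟨z (.inl 0), z (.inl 1), by exact_mod_cast hpos, hle, rfl⟩, ?_⟩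
    rw [err_intCast_fin_two]
    exact max_le_max (round_le _ _) (round_le _ _)

end TwoByTwo

end LinearForms

open LinearForms in
theorem stmt19_general (θ11 θ12 θ21 θ22 : ℝ)
    (hgood : ∀ x₁ x₂ : ℤ, ¬(x₁ = 0 ∧ x₂ = 0) →
      ¬∃ y₁ y₂ : ℤ, θ11 * x₁ + θ21 * x₂ = (y₁ : ℝ) ∧ θ12 * x₁ + θ22 * x₂ = (y₂ : ℝ))
    (omegaHat : ℝ)
    (homegaHat : IsLUB {γ : ℝ | 0 ≤ γ ∧ ∃ C : ℝ,
      ∀ᶠ t : ℝ in atTop, t ^ γ * psiM θ11 θ12 θ21 θ22 t ≤ C} omegaHat) :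
    ∀ x : ℝ,
      x < (1 - omegaHat + Real.sqrt ((1 - omegaHat) ^ 2 +
        4 * omegaHat * (2 * omegaHat ^ 2 - 2 * omegaHat + 1))) / 2 →
      ∃ γ : ℝ, (0 ≤ γ ∧ ∃ C : ℝ,
        ∃ᶠ t : ℝ in atTop, t ^ γ * psiM θ11 θ12 θ21 θ22 t ≤ C) ∧ x < γ := by
  intro x hx
  simp only [psiM_eq_psi] at homegaHat ⊢
  set Θ : Matrix (Fin 2) (Fin 2) ℝ := !![θ11, θ12; θ21, θ22]
  have hΘ : Function.Injective (residual Θ.transpose) := by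
    rw [Matrix.eta_fin_two Θ.transpose]
    exact residual_injective_of_forall_int_fin_two hgood
  have hone : IsUniformExponent Θ 1 := isUniformExponent_one Θ le_rfl
  rcases lt_or_ge x 1 with hx1 | hx1
  · exact ⟨1, ⟨zero_le_one, hone.isOrdinaryExponent⟩, hx1⟩
  have hω : 1 < omegaHat := not_le.1 fun hle => (hx1.trans_lt hx).not_ge
    (exponentBound_le_one (homegaHat.1 ⟨le_rfl, hone.mono zero_le_one⟩) hle)
  obtain ⟨η, ⟨hη1, hη⟩, hxη⟩ := exists_mem_Ioo_lt_exponentBound hω hx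
  obtain ⟨γ, ⟨-, hγ⟩, hηγ⟩ := (lt_isLUB_iff homegaHat).1 hη
  have hη' : IsUniformExponent Θ η := IsUniformExponent.mono hγ hηγ.le
  obtain ⟨ω, hxω, hωη⟩ := exists_between hxη
  exact ⟨ω, ⟨by linarith, isOrdinaryExponent_of_lt_exponentBound hΘ hη1 hη' hωη⟩, hxω⟩

/-- Moshchevitin's improvement of Jarník's inequality for `m = n = 2`:
`ω ≥ (1 − ω̂ + √((1 − ω̂)² + 4ω̂(2ω̂² − 2ω̂ + 1)))/2`.
The conclusion `ω ≥ RHS`, where `ω = sup{γ ≥ 0 : liminf t^γ ψ(t) < ∞}` (possibly `+∞`),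
is expressed as: every real `x < RHS` is exceeded by some element of that set. -/
theorem stmt19 (θ11 θ12 θ21 θ22 : ℝ)
    (hindep : LinearIndependent ℚ ![(1 : ℝ), θ11, θ12, θ21, θ22])
    (hgood : ∀ x₁ x₂ : ℤ, ¬(x₁ = 0 ∧ x₂ = 0) →
      ¬∃ y₁ y₂ : ℤ, θ11 * x₁ + θ12 * x₂ = (y₁ : ℝ) ∧ θ21 * x₁ + θ22 * x₂ = (y₂ : ℝ))
    (omegaHat : ℝ)
    (homegaHat : IsLUB {γ : ℝ | 0 ≤ γ ∧ ∃ C : ℝ,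
      ∀ᶠ t : ℝ in atTop, t ^ γ * psiM θ11 θ12 θ21 θ22 t ≤ C} omegaHat) :
    ∀ x : ℝ,
      x < (1 - omegaHat + Real.sqrt ((1 - omegaHat) ^ 2 +
        4 * omegaHat * (2 * omegaHat ^ 2 - 2 * omegaHat + 1))) / 2 →
      ∃ γ : ℝ, (0 ≤ γ ∧ ∃ C : ℝ,
        ∃ᶠ t : ℝ in atTop, t ^ γ * psiM θ11 θ12 θ21 θ22 t ≤ C) ∧ x < γ :=
  stmt19_general θ11 θ12 θ21 θ22
    (LinearForms.transpose_ne_int_of_linearIndependent hindep) omegaHat homegaHat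
end
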